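/- Let k be a field of characteristic p > 0, I an infinitesimal group scheme over k, and X a scheme of finite type over k equipped with an I-action. Then (i) there exists a categorical quotient φ : X → X/I, where X/I is a scheme of finite type over k and φ is finite, surjective, and radicial; and (ii) for any integer n ≥ h(I) (the height of I), the n-th relative Frobenius morphism F^n_{X/k} : X → X^{(p^n)} factors uniquely as ψ ∘ φ where ψ : X/I → X^{(p^n)}, and ψ is also finite, surjective, and radicial. -/

import Mathlib

open AlgebraicGeometry CategoryTheory CategoryTheory.Limits Opposite

universe u

noncomputable section

/-- The spectrum of the field `k`, the base of all schemes considered. -/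
abbrev Spk (k : Type u) [Field k] : Scheme.{u} := Spec (CommRingCat.of k)

/-- A scheme over the field `k`: a scheme together with a structure morphism to `Spec k`. -/
structure SchemeOver (k : Type u) [Field k] : Type (u + 1) where
  carrier : Scheme.{u}
  str : carrier ⟶ Spk k

variable (k : Type u) [Field k]

/-- A group scheme over `k`, presented via its functor of points: for every scheme `T`
and every pair of `T`-points lying over the same `T`-point of `Spec k`, a product point,
together with unit and inverse, satisfying the group axioms functorially. -/
structure GroupSchemeOver extends SchemeOver k where
  mul : ∀ {T : Scheme.{u}} (a b : T ⟶ carrier), a ≫ str = b ≫ str → (T ⟶ carrier)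
  one : Spk k ⟶ carrier
  inv : ∀ {T : Scheme.{u}}, (T ⟶ carrier) → (T ⟶ carrier)
  mul_str : ∀ {T : Scheme.{u}} (a b : T ⟶ carrier) (h), mul a b h ≫ str = a ≫ str
  one_str : one ≫ str = 𝟙 (Spk k)
  inv_str : ∀ {T : Scheme.{u}} (a : T ⟶ carrier), inv a ≫ str = a ≫ str
  mul_natural : ∀ {T' T : Scheme.{u}} (g : T' ⟶ T) (a b : T ⟶ carrier) (h h'),
    g ≫ mul a b h = mul (g ≫ a) (g ≫ b) h'
  inv_natural : ∀ {T' T : Scheme.{u}} (g : T' ⟶ T) (a : T ⟶ carrier),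
    g ≫ inv a = inv (g ≫ a)
  mul_assoc : ∀ {T : Scheme.{u}} (a b c : T ⟶ carrier) (h₁ h₂ h₃ h₄),
    mul (mul a b h₁) c h₂ = mul a (mul b c h₃) h₄
  one_mul : ∀ {T : Scheme.{u}} (a : T ⟶ carrier) (h), mul (a ≫ str ≫ one) a h = a
  mul_one : ∀ {T : Scheme.{u}} (a : T ⟶ carrier) (h), mul a (a ≫ str ≫ one) h = a
  inv_mul : ∀ {T : Scheme.{u}} (a : T ⟶ carrier) (h), mul (inv a) a h = a ≫ str ≫ one

variable {k}

theorem GroupSchemeOver.mul_congr (G : GroupSchemeOver k) {T : Scheme.{u}}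
    {a a' b b' : T ⟶ G.carrier} (ha : a = a') (hb : b = b') (h h') :
    G.mul a b h = G.mul a' b' h' := by subst ha; subst hb; rfl

/-- A homomorphism of group schemes over `k`. -/
structure GroupHom (G H : GroupSchemeOver k) where
  hom : G.carrier ⟶ H.carrier
  hom_str : hom ≫ H.str = G.str
  hom_one : G.one ≫ hom = H.one
  hom_mul : ∀ {T : Scheme.{u}} (a b : T ⟶ G.carrier) (h h'),
    G.mul a b h ≫ hom = H.mul (a ≫ hom) (b ≫ hom) h'

/-- An action of a group scheme `G` over `k` on a scheme `X` over `k`, presented via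
its functor of points. -/
structure ActionOver (G : GroupSchemeOver k) (X : SchemeOver k) where
  act : ∀ {T : Scheme.{u}} (g : T ⟶ G.carrier) (x : T ⟶ X.carrier),
    g ≫ G.str = x ≫ X.str → (T ⟶ X.carrier)
  act_str : ∀ {T : Scheme.{u}} (g : T ⟶ G.carrier) (x : T ⟶ X.carrier) (h),
    act g x h ≫ X.str = x ≫ X.str
  act_natural : ∀ {T' T : Scheme.{u}} (f : T' ⟶ T) (g : T ⟶ G.carrier)
    (x : T ⟶ X.carrier) (h h'), f ≫ act g x h = act (f ≫ g) (f ≫ x) h'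
  one_act : ∀ {T : Scheme.{u}} (x : T ⟶ X.carrier) (h), act (x ≫ X.str ≫ G.one) x h = x
  mul_act : ∀ {T : Scheme.{u}} (g g' : T ⟶ G.carrier) (x : T ⟶ X.carrier) (h₁ h₂ h₃ h₄),
    act (G.mul g g' h₁) x h₂ = act g (act g' x h₃) h₄

theorem ActionOver.act_congr {G : GroupSchemeOver k} {X : SchemeOver k}
    (α : ActionOver G X) {T : Scheme.{u}} {g g' : T ⟶ G.carrier} {x x' : T ⟶ X.carrier}
    (hg : g = g') (hx : x = x') (h h') : α.act g x h = α.act g' x' h' := by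
  subst hg; subst hx; rfl

/-- The action of a group scheme on itself by left translations. -/
def GroupSchemeOver.selfAction (G : GroupSchemeOver k) : ActionOver G G.toSchemeOver where
  act g x h := G.mul g x h
  act_str g x h := (G.mul_str g x h).trans h
  act_natural f g x h h' := G.mul_natural f g x h h'
  one_act x h := G.one_mul x h
  mul_act g g' x h₁ h₂ h₃ h₄ := G.mul_assoc g g' x h₁ h₂ h₃ h₄

/-- Restriction of an action along a homomorphism of group schemes. -/
def ActionOver.res {G H : GroupSchemeOver k} {X : SchemeOver k} (φ : GroupHom H G)
    (α : ActionOver G X) : ActionOver H X where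
  act g x h := α.act (g ≫ φ.hom) x (by rw [Category.assoc, φ.hom_str, h])
  act_str g x h := α.act_str _ _ _
  act_natural f g x h h' := by
    refine (α.act_natural f (g ≫ φ.hom) x _ ?_).trans (α.act_congr ?_ rfl _ _)
    · simp only [Category.assoc, φ.hom_str, ← h']
    · simp only [Category.assoc]
  one_act x h := by
    refine (α.act_congr ?_ rfl _ ?_).trans (α.one_act x ?_)
    · simp only [Category.assoc, φ.hom_one]
    · simp only [Category.assoc, G.one_str, Category.comp_id]
    · simp only [Category.assoc, G.one_str, Category.comp_id]
  mul_act g g' x h₁ h₂ h₃ h₄ := by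
    have hg : g ≫ H.str = x ≫ X.str := (H.mul_str g g' h₁).symm.trans h₂
    have hg' : g' ≫ H.str = x ≫ X.str := h₁.symm.trans hg
    have p1 : (g ≫ φ.hom) ≫ G.str = (g' ≫ φ.hom) ≫ G.str := by
      simp only [Category.assoc, φ.hom_str]; exact h₁
    have p3 : (g' ≫ φ.hom) ≫ G.str = x ≫ X.str := by
      simp only [Category.assoc, φ.hom_str]; exact hg'
    refine (α.act_congr (φ.hom_mul g g' h₁ p1) rfl _ ?_).trans
      (α.mul_act (g ≫ φ.hom) (g' ≫ φ.hom) x p1 ?_ p3 ?_)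
    · rw [G.mul_str]
      simp only [Category.assoc, φ.hom_str]; exact hg
    · rw [G.mul_str]
      simp only [Category.assoc, φ.hom_str]; exact hg
    · rw [α.act_str]
      simp only [Category.assoc, φ.hom_str]; exact hg
/-! ### Vector bundles and line bundles, geometrically -/

/-- The data underlying a (geometric) vector bundle on a scheme `X`: a total space `π : tot ⟶ X`
together with a fiberwise `Γ(T, ⊤)`-module structure on the `T`-points of `tot` over a fixed
`T`-point of `X`, functorially in `T`. -/
structure VecBundleData (X : Scheme.{u}) : Type (u + 1) where
  tot : Scheme.{u}
  π : tot ⟶ X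
  zero : X ⟶ tot
  zero_π : zero ≫ π = 𝟙 X
  add : ∀ {T : Scheme.{u}} (a b : T ⟶ tot), a ≫ π = b ≫ π → (T ⟶ tot)
  smul : ∀ {T : Scheme.{u}} (f : Γ(T, ⊤)) (a : T ⟶ tot), T ⟶ tot
  add_π : ∀ {T : Scheme.{u}} (a b : T ⟶ tot) (h), add a b h ≫ π = a ≫ π
  smul_π : ∀ {T : Scheme.{u}} (f : Γ(T, ⊤)) (a : T ⟶ tot), smul f a ≫ π = a ≫ π
  add_natural : ∀ {T' T : Scheme.{u}} (g : T' ⟶ T) (a b : T ⟶ tot) (h h'),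
    g ≫ add a b h = add (g ≫ a) (g ≫ b) h'
  smul_natural : ∀ {T' T : Scheme.{u}} (g : T' ⟶ T) (f : Γ(T, ⊤)) (a : T ⟶ tot),
    g ≫ smul f a = smul (g.appTop f) (g ≫ a)
  add_comm : ∀ {T : Scheme.{u}} (a b : T ⟶ tot) (h h'), add a b h = add b a h'
  add_assoc : ∀ {T : Scheme.{u}} (a b c : T ⟶ tot) (h₁ h₂ h₃ h₄),
    add (add a b h₁) c h₂ = add a (add b c h₃) h₄
  zero_add : ∀ {T : Scheme.{u}} (a : T ⟶ tot) (h), add ((a ≫ π) ≫ zero) a h = a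
  one_smul : ∀ {T : Scheme.{u}} (a : T ⟶ tot), smul 1 a = a
  mul_smul : ∀ {T : Scheme.{u}} (f g : Γ(T, ⊤)) (a : T ⟶ tot), smul (f * g) a = smul f (smul g a)
  smul_add : ∀ {T : Scheme.{u}} (f : Γ(T, ⊤)) (a b : T ⟶ tot) (h h'),
    smul f (add a b h) = add (smul f a) (smul f b) h'
  add_smul : ∀ {T : Scheme.{u}} (f g : Γ(T, ⊤)) (a : T ⟶ tot) (h),
    smul (f + g) a = add (smul f a) (smul g a) h
  zero_smul : ∀ {T : Scheme.{u}} (a : T ⟶ tot), smul 0 a = (a ≫ π) ≫ zero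
  smul_zero : ∀ {T : Scheme.{u}} (f : Γ(T, ⊤)) (x : T ⟶ X), smul f (x ≫ zero) = x ≫ zero

namespace VecBundleData

variable {X : Scheme.{u}} (E : VecBundleData X)

theorem add_congr {T : Scheme.{u}} {a a' b b' : T ⟶ E.tot} (ha : a = a') (hb : b = b')
    (h h') : E.add a b h = E.add a' b' h' := by subst ha; subst hb; rfl

/-- The fiber of a vector bundle over a `T`-point of the base. -/
abbrev Fiber {T : Scheme.{u}} (x : T ⟶ X) : Type u := { a : T ⟶ E.tot // a ≫ E.π = x }

instance fiberZero {T : Scheme.{u}} (x : T ⟶ X) : Zero (E.Fiber x) :=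
  ⟨⟨x ≫ E.zero, by rw [Category.assoc, E.zero_π, Category.comp_id]⟩⟩

instance fiberAdd {T : Scheme.{u}} (x : T ⟶ X) : Add (E.Fiber x) :=
  ⟨fun a b => ⟨E.add a.1 b.1 (a.2.trans b.2.symm), (E.add_π _ _ _).trans a.2⟩⟩

instance fiberSMul {T : Scheme.{u}} (x : T ⟶ X) : SMul Γ(T, ⊤) (E.Fiber x) :=
  ⟨fun f a => ⟨E.smul f a.1, (E.smul_π _ _).trans a.2⟩⟩

@[simp] theorem coe_fiber_zero {T : Scheme.{u}} (x : T ⟶ X) :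
    ((0 : E.Fiber x) : T ⟶ E.tot) = x ≫ E.zero := rfl

@[simp] theorem coe_fiber_add {T : Scheme.{u}} (x : T ⟶ X) (a b : E.Fiber x) :
    ((a + b : E.Fiber x) : T ⟶ E.tot) = E.add a.1 b.1 (a.2.trans b.2.symm) := rfl

@[simp] theorem coe_fiber_smul {T : Scheme.{u}} (x : T ⟶ X) (f : Γ(T, ⊤)) (a : E.Fiber x) :
    ((f • a : E.Fiber x) : T ⟶ E.tot) = E.smul f a.1 := rfl

instance {T : Scheme.{u}} (x : T ⟶ X) : AddCommMonoid (E.Fiber x) where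
  add_assoc a b c := Subtype.ext (E.add_assoc _ _ _ _ _ _ _)
  add_comm a b := Subtype.ext (E.add_comm _ _ _ _)
  zero_add a := Subtype.ext (by
    have hz : ((a.1 ≫ E.π) ≫ E.zero) ≫ E.π = a.1 ≫ E.π := by
      rw [Category.assoc, E.zero_π, Category.comp_id]
    show E.add (x ≫ E.zero) a.1 _ = a.1
    exact (E.add_congr (by rw [a.2]) rfl _ hz).trans (E.zero_add a.1 hz))
  add_zero a := Subtype.ext (by
    have hz : ((a.1 ≫ E.π) ≫ E.zero) ≫ E.π = a.1 ≫ E.π := by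
      rw [Category.assoc, E.zero_π, Category.comp_id]
    have hz' : (x ≫ E.zero) ≫ E.π = a.1 ≫ E.π := by
      rw [Category.assoc, E.zero_π, Category.comp_id, a.2]
    show E.add a.1 (x ≫ E.zero) _ = a.1
    exact (E.add_comm _ _ _ hz').trans
      ((E.add_congr (by rw [a.2]) rfl _ hz).trans (E.zero_add a.1 hz)))
  nsmul := nsmulRec
  nsmul_zero _ := rfl
  nsmul_succ _ _ := rfl

instance {T : Scheme.{u}} (x : T ⟶ X) : Module Γ(T, ⊤) (E.Fiber x) where
  one_smul a := Subtype.ext (E.one_smul a.1)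
  mul_smul f g a := Subtype.ext (E.mul_smul f g a.1)
  smul_zero f := Subtype.ext (E.smul_zero f x)
  smul_add f a b := Subtype.ext (E.smul_add f a.1 b.1 _ _)
  add_smul f g a := Subtype.ext (E.add_smul f g a.1 _)
  zero_smul a := Subtype.ext ((E.zero_smul a.1).trans (by rw [a.2]; rfl))

/-- A family of `n` local sections of `E` over an open subset `U` is a frame if every point
of the total space over `U` is, in a unique way, a linear combination of these sections. -/
def IsFrame {n : ℕ} (U : X.Opens) (s : Fin n → (U.toScheme ⟶ E.tot)) : Prop :=
  ∃ hs : ∀ i, s i ≫ E.π = U.ι,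
    ∀ {T : Scheme.{u}} (x : T ⟶ U.toScheme),
      Function.Bijective (fun f : Fin n → Γ(T, ⊤) =>
        (∑ i, f i • (⟨x ≫ s i, by rw [Category.assoc, hs i]⟩ : E.Fiber (x ≫ U.ι))))

/-- A family of `n` global sections of `E` is a global frame if every point of the total
space is, in a unique way, a linear combination of these sections. -/
def IsGlobalFrame {n : ℕ} (s : Fin n → (X ⟶ E.tot)) : Prop :=
  ∃ hs : ∀ i, s i ≫ E.π = 𝟙 X,
    ∀ {T : Scheme.{u}} (x : T ⟶ X),
      Function.Bijective (fun f : Fin n → Γ(T, ⊤) =>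
        (∑ i, f i • (⟨x ≫ s i, by rw [Category.assoc, hs i, Category.comp_id]⟩ : E.Fiber x)))

end VecBundleData

/-- A (geometric) vector bundle of rank `n` on `X`: bundle data which is locally trivial,
i.e. admits local frames around every point of `X`. -/
structure VecBundle (n : ℕ) (X : Scheme.{u}) extends VecBundleData X where
  locTriv : ∀ x : X, ∃ (U : X.Opens) (s : Fin n → (U.toScheme ⟶ tot)),
    x ∈ U ∧ toVecBundleData.IsFrame U s

/-- A (geometric) line bundle on a scheme. -/
abbrev LineBundle (X : Scheme.{u}) := VecBundle 1 X

/-- A morphism of total spaces of vector bundles over `X` is linear if it commutes with the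
projections, the fiberwise additions and the fiberwise scalar multiplications. -/
def IsLinearHom {X : Scheme.{u}} (E F : VecBundleData X) (φ : E.tot ⟶ F.tot) : Prop :=
  (φ ≫ F.π = E.π) ∧
  (∀ {T : Scheme.{u}} (a b : T ⟶ E.tot) (h h'), E.add a b h ≫ φ = F.add (a ≫ φ) (b ≫ φ) h') ∧
  (∀ {T : Scheme.{u}} (f : Γ(T, ⊤)) (a : T ⟶ E.tot), E.smul f a ≫ φ = F.smul f (a ≫ φ))

/-- Two vector bundles on `X` are isomorphic if there is a linear isomorphism between them. -/
def VBIso {X : Scheme.{u}} {n m : ℕ} (E : VecBundle n X) (F : VecBundle m X) : Prop :=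
  ∃ φ : E.tot ⟶ F.tot, IsLinearHom E.toVecBundleData F.toVecBundleData φ ∧ IsIso φ

/-- `F` is a pullback of the vector bundle `E` along `g : Y ⟶ X`. -/
def IsPullbackBundle {Y X : Scheme.{u}} (g : Y ⟶ X) {n : ℕ} (E : VecBundle n X)
    (F : VecBundle n Y) : Prop :=
  ∃ τ : F.tot ⟶ E.tot,
    (τ ≫ E.π = F.π ≫ g) ∧
    (∀ {T : Scheme.{u}} (a b : T ⟶ F.tot) (h h'), F.add a b h ≫ τ = E.add (a ≫ τ) (b ≫ τ) h') ∧
    (∀ {T : Scheme.{u}} (f : Γ(T, ⊤)) (a : T ⟶ F.tot), F.smul f a ≫ τ = E.smul f (a ≫ τ)) ∧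
    (∀ {T : Scheme.{u}} (y : T ⟶ Y) (a : T ⟶ E.tot), a ≫ E.π = y ≫ g →
      ∃! b : T ⟶ F.tot, b ≫ F.π = y ∧ b ≫ τ = a)

/-- A vector bundle is trivial if it admits a global frame. -/
def IsTrivialBundle {X : Scheme.{u}} {n : ℕ} (E : VecBundle n X) : Prop :=
  ∃ s : Fin n → (X ⟶ E.tot), E.toVecBundleData.IsGlobalFrame s

/-- `N` is a tensor product of the line bundles `L` and `M`: witnessed by a fiberwise
bilinear pairing taking local frames to local frames. -/
def IsTensor {X : Scheme.{u}} (L M N : LineBundle X) : Prop :=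
  ∃ β : ∀ {T : Scheme.{u}} (a : T ⟶ L.tot) (b : T ⟶ M.tot), a ≫ L.π = b ≫ M.π → (T ⟶ N.tot),
    (∀ {T : Scheme.{u}} (a : T ⟶ L.tot) (b : T ⟶ M.tot) (h), β a b h ≫ N.π = a ≫ L.π) ∧
    (∀ {T' T : Scheme.{u}} (g : T' ⟶ T) (a : T ⟶ L.tot) (b : T ⟶ M.tot) (h h'),
      g ≫ β a b h = β (g ≫ a) (g ≫ b) h') ∧
    (∀ {T : Scheme.{u}} (a a' : T ⟶ L.tot) (b : T ⟶ M.tot) (h₁ h₂ h₃ h₄ h₅),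
      β (L.add a a' h₁) b h₂ = N.add (β a b h₃) (β a' b h₄) h₅) ∧
    (∀ {T : Scheme.{u}} (a : T ⟶ L.tot) (b b' : T ⟶ M.tot) (h₁ h₂ h₃ h₄ h₅),
      β a (M.add b b' h₁) h₂ = N.add (β a b h₃) (β a b' h₄) h₅) ∧
    (∀ {T : Scheme.{u}} (f : Γ(T, ⊤)) (a : T ⟶ L.tot) (b : T ⟶ M.tot) (h₁ h₂),
      β (L.smul f a) b h₁ = N.smul f (β a b h₂)) ∧
    (∀ {T : Scheme.{u}} (f : Γ(T, ⊤)) (a : T ⟶ L.tot) (b : T ⟶ M.tot) (h₁ h₂),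
      β a (M.smul f b) h₁ = N.smul f (β a b h₂)) ∧
    (∀ (U : X.Opens) (sL : Fin 1 → (U.toScheme ⟶ L.tot)) (sM : Fin 1 → (U.toScheme ⟶ M.tot)),
      L.toVecBundleData.IsFrame U sL → M.toVecBundleData.IsFrame U sM →
      ∀ (h : sL 0 ≫ L.π = sM 0 ≫ M.π),
        N.toVecBundleData.IsFrame (n := 1) U (fun _ => β (sL 0) (sM 0) h))

/-- `N` is an `m`-th tensor power of the line bundle `L`. -/
def IsTensorPow {X : Scheme.{u}} (L : LineBundle X) : ℕ → LineBundle X → Prop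
  | 0, N => IsTrivialBundle N
  | m + 1, N => ∃ M : LineBundle X, IsTensorPow L m M ∧ IsTensor M L N

/-- A line bundle is ample if the base is quasi-compact and quasi-separated and the
non-vanishing loci of global sections of positive tensor powers give an affine open cover. -/
def IsAmple {X : Scheme.{u}} (L : LineBundle X) : Prop :=
  CompactSpace X ∧ QuasiSeparatedSpace X ∧
  ∀ x : X, ∃ (m : ℕ), 0 < m ∧ ∃ (N : LineBundle X), IsTensorPow L m N ∧
    ∃ (s : X ⟶ N.tot), s ≫ N.π = 𝟙 X ∧
      ∃ U : X.Opens, IsAffineOpen U ∧ x ∈ U ∧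
        (U : Set X) = {y : X | s.base y ≠ N.zero.base y}
/-! ### Properties of schemes and group schemes over `k` -/

/-- An algebraic group over `k` is a group scheme of finite type over `k`. -/
def GroupSchemeOver.IsAlgebraic {k : Type u} [Field k] (G : GroupSchemeOver k) : Prop :=
  LocallyOfFiniteType G.str ∧ QuasiCompact G.str

/-- A scheme of finite type over `k`. -/
def SchemeOver.IsFiniteType {k : Type u} [Field k] (X : SchemeOver k) : Prop :=
  LocallyOfFiniteType X.str ∧ QuasiCompact X.str

/-- A variety over `k`: an integral separated scheme of finite type over `k`. -/
def SchemeOver.IsVariety {k : Type u} [Field k] (X : SchemeOver k) : Prop :=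
  IsIntegral X.carrier ∧ AlgebraicGeometry.IsSeparated X.str ∧ X.IsFiniteType

/-- A scheme is normal if all its local rings are integrally closed domains. -/
def IsNormalScheme (X : Scheme.{u}) : Prop :=
  ∀ x : X, IsDomain (X.presheaf.stalk x) ∧ IsIntegrallyClosed (X.presheaf.stalk x)

/-- The base change of a scheme over `k` to the algebraic closure of `k`. -/
def SchemeOver.geomFiber {k : Type u} [Field k] (X : SchemeOver k) : Scheme.{u} :=
  pullback X.str (Spec.map (CommRingCat.ofHom (algebraMap k (AlgebraicClosure k))))

/-- A scheme over `k` is geometrically integral if its base change to an algebraic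
closure of `k` is integral. -/
def SchemeOver.IsGeomIntegral {k : Type u} [Field k] (X : SchemeOver k) : Prop :=
  IsIntegral X.geomFiber

/-- A scheme over `k` is geometrically connected if its base change to an algebraic
closure of `k` is connected. -/
def SchemeOver.IsGeomConnected {k : Type u} [Field k] (X : SchemeOver k) : Prop :=
  ConnectedSpace X.geomFiber

/-- A scheme over `k` is geometrically irreducible if its base change to an algebraic
closure of `k` is irreducible. -/
def SchemeOver.IsGeomIrreducible {k : Type u} [Field k] (X : SchemeOver k) : Prop :=
  IrreducibleSpace X.geomFiber

/-- An open subscheme of a scheme over `k`, as a scheme over `k`. -/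
def SchemeOver.ofOpens {k : Type u} [Field k] (X : SchemeOver k) (U : X.carrier.Opens) :
    SchemeOver k :=
  ⟨U.toScheme, U.ι ≫ X.str⟩

/-- A scheme over `k` is quasi-projective if it is separated, of finite type, and carries
an ample line bundle. -/
def SchemeOver.IsQuasiProjective {k : Type u} [Field k] (X : SchemeOver k) : Prop :=
  AlgebraicGeometry.IsSeparated X.str ∧ X.IsFiniteType ∧
    ∃ L : LineBundle X.carrier, IsAmple L

/-- An open subset of `X` is stable under an action of `G` if the action preserves its
`T`-points, for all `T`. -/
def ActionOver.Stable {k : Type u} [Field k] {G : GroupSchemeOver k} {X : SchemeOver k}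
    (α : ActionOver G X) (U : X.carrier.Opens) : Prop :=
  ∀ {T : Scheme.{u}} (g : T ⟶ G.carrier) (x : T ⟶ X.carrier) (h),
    Set.range x.base ⊆ (U : Set X.carrier) →
      Set.range (α.act g x h).base ⊆ (U : Set X.carrier)

/-- A `G`-linearization of a vector bundle `E` on a `G`-scheme `X`: an action of `G` on the
total space of `E`, lifting the action on `X` and acting linearly on the fibers (equivalently,
an action of `G × 𝔾ₘ` on `E` for which the projection is equivariant and `𝔾ₘ` acts by
multiplication on the fibers). -/
structure LinearizationData {k : Type u} [Field k] {G : GroupSchemeOver k} {X : SchemeOver k}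
    (α : ActionOver G X) {n : ℕ} (E : VecBundle n X.carrier) where
  lact : ∀ {T : Scheme.{u}} (g : T ⟶ G.carrier) (e : T ⟶ E.tot),
    g ≫ G.str = (e ≫ E.π) ≫ X.str → (T ⟶ E.tot)
  lact_π : ∀ {T : Scheme.{u}} (g : T ⟶ G.carrier) (e : T ⟶ E.tot) (h h'),
    lact g e h ≫ E.π = α.act g (e ≫ E.π) h'
  lact_natural : ∀ {T' T : Scheme.{u}} (f : T' ⟶ T) (g : T ⟶ G.carrier) (e : T ⟶ E.tot) (h h'),
    f ≫ lact g e h = lact (f ≫ g) (f ≫ e) h'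
  one_lact : ∀ {T : Scheme.{u}} (e : T ⟶ E.tot) (h), lact (((e ≫ E.π) ≫ X.str) ≫ G.one) e h = e
  mul_lact : ∀ {T : Scheme.{u}} (g g' : T ⟶ G.carrier) (e : T ⟶ E.tot) (h₁ h₂ h₃ h₄),
    lact (G.mul g g' h₁) e h₂ = lact g (lact g' e h₃) h₄
  lact_add : ∀ {T : Scheme.{u}} (g : T ⟶ G.carrier) (a b : T ⟶ E.tot) (h₁ h₂ h₃ h₄ h₅),
    lact g (E.add a b h₁) h₂ = E.add (lact g a h₃) (lact g b h₄) h₅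
  lact_smul : ∀ {T : Scheme.{u}} (g : T ⟶ G.carrier) (f : Γ(T, ⊤)) (a : T ⟶ E.tot) (h₁ h₂),
    lact g (E.smul f a) h₁ = E.smul f (lact g a h₂)

/-- A vector bundle is `G`-linearized (linearizable) if it admits a linearization. -/
def ActionOver.IsLinearized {k : Type u} [Field k] {G : GroupSchemeOver k} {X : SchemeOver k}
    (α : ActionOver G X) {n : ℕ} (E : VecBundle n X.carrier) : Prop :=
  Nonempty (LinearizationData α E)

/-- Equivariance of a morphism relative to a homomorphism of group schemes. -/
def IsEquivariantRel {k : Type u} [Field k] {G H : GroupSchemeOver k} {X Y : SchemeOver k}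
    (φ : GroupHom G H) (α : ActionOver G X) (β : ActionOver H Y)
    (f : X.carrier ⟶ Y.carrier) : Prop :=
  f ≫ Y.str = X.str ∧
  ∀ {T : Scheme.{u}} (g : T ⟶ G.carrier) (x : T ⟶ X.carrier) (h h'),
    α.act g x h ≫ f = β.act (g ≫ φ.hom) (x ≫ f) h'

/-- Equivariance of a morphism of `G`-schemes. -/
def IsEquivariant {k : Type u} [Field k] {G : GroupSchemeOver k} {X Y : SchemeOver k}
    (α : ActionOver G X) (β : ActionOver G Y) (f : X.carrier ⟶ Y.carrier) : Prop :=
  f ≫ Y.str = X.str ∧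
  ∀ {T : Scheme.{u}} (g : T ⟶ G.carrier) (x : T ⟶ X.carrier) (h h'),
    α.act g x h ≫ f = β.act g (x ≫ f) h'

/-- A `T`-point of `G` acts trivially if it acts trivially on all points of `X` over `T`. -/
def ActionOver.ActsTrivially {k : Type u} [Field k] {G : GroupSchemeOver k}
    {X : SchemeOver k} (α : ActionOver G X) {T : Scheme.{u}} (g : T ⟶ G.carrier) : Prop :=
  ∀ {T' : Scheme.{u}} (t : T' ⟶ T) (x : T' ⟶ X.carrier) (h), α.act (t ≫ g) x h = x

/-- An action is almost faithful if its kernel is finite, i.e. all trivially acting points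
factor through a fixed closed subscheme of `G` which is finite over `k`. -/
def ActionOver.IsAlmostFaithful {k : Type u} [Field k] {G : GroupSchemeOver k}
    {X : SchemeOver k} (α : ActionOver G X) : Prop :=
  ∃ (K : Scheme.{u}) (ι : K ⟶ G.carrier), IsClosedImmersion ι ∧ IsFinite (ι ≫ G.str) ∧
    ∀ {T : Scheme.{u}} (g : T ⟶ G.carrier), α.ActsTrivially g → ∃ g' : T ⟶ K, g' ≫ ι = g

/-- An abelian variety over `k` is a smooth connected proper algebraic group over `k`. -/
def GroupSchemeOver.IsAbelianVariety {k : Type u} [Field k] (G : GroupSchemeOver k) : Prop :=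
  G.IsAlgebraic ∧ IsSmooth G.str ∧ ConnectedSpace G.carrier ∧ IsProper G.str
/-! ### Frobenius twists and quotients in characteristic `p` -/

/-- The morphism `Spec k ⟶ Spec k` induced by the `n`-th iterate of the Frobenius of `k`. -/
def frobSpec (k : Type u) [Field k] (p : ℕ) [Fact p.Prime] [CharP k p] (n : ℕ) :
    Spk k ⟶ Spk k :=
  Spec.map (CommRingCat.ofHom (iterateFrobenius k p n))

/-- `F : X ⟶ X` is the absolute `q`-power Frobenius endomorphism of `X`: the identity on the
underlying space, and the `q`-th power map on functions. -/
def IsAbsoluteFrobenius (X : Scheme.{u}) (q : ℕ) (F : X ⟶ X) : Prop :=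
  (∀ x : X, F.base x = x) ∧
  ∀ (U : X.Opens) (e : Opposite.op U = Opposite.op (F ⁻¹ᵁ U)) (a : Γ(X, U)),
    F.app U a = X.presheaf.map (eqToHom e) (a ^ q)

/-- Data exhibiting the `n`-th Frobenius twist `X^{(pⁿ)}` of a scheme `X` over `k` (as the base
change of `X` along the `n`-th Frobenius of `k`), together with the relative Frobenius morphism
`F^n_{X/k} : X ⟶ X^{(pⁿ)}` (the canonical factorization of the absolute Frobenius). -/
structure FrobeniusData (k : Type u) [Field k] (p : ℕ) [Fact p.Prime] [CharP k p] (n : ℕ)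
    (X : SchemeOver k) where
  tw : SchemeOver k
  pr : tw.carrier ⟶ X.carrier
  is_pullback : IsPullback pr tw.str X.str (frobSpec k p n)
  rel : X.carrier ⟶ tw.carrier
  rel_str : rel ≫ tw.str = X.str
  abs : X.carrier ⟶ X.carrier
  abs_frob : IsAbsoluteFrobenius X.carrier (p ^ n) abs
  rel_pr : rel ≫ pr = abs

/-- A group scheme over `k` is infinitesimal if it is finite and radicial over `Spec k`. -/
def GroupSchemeOver.IsInfinitesimal {k : Type u} [Field k] (I : GroupSchemeOver k) : Prop :=
  I.IsAlgebraic ∧ IsFinite I.str ∧ UniversallyInjective I.str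

/-- `n` is at least the height of the infinitesimal group scheme `I`, i.e. the `n`-th relative
Frobenius of `I` factors through the unit section of the twist (equivalently `I_n = I`). -/
def FrobKillsAt (k : Type u) [Field k] (p : ℕ) [Fact p.Prime] [CharP k p]
    (I : GroupSchemeOver k) (n : ℕ) : Prop :=
  ∀ FD : FrobeniusData k p n I.toSchemeOver,
    ∃ u : Spk k ⟶ FD.tw.carrier,
      u ≫ FD.pr = frobSpec k p n ≫ I.one ∧ u ≫ FD.tw.str = 𝟙 (Spk k) ∧
      FD.rel = I.str ≫ u

/-- `φ : X ⟶ Q` is a categorical quotient (in the category of schemes over `k`) of `X` by the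
action `α`. -/
def IsCatQuotient {k : Type u} [Field k] {I : GroupSchemeOver k} {X : SchemeOver k}
    (α : ActionOver I X) (Q : SchemeOver k) (φ : X.carrier ⟶ Q.carrier) : Prop :=
  φ ≫ Q.str = X.str ∧
  (∀ {T : Scheme.{u}} (g : T ⟶ I.carrier) (x : T ⟶ X.carrier) (h),
    α.act g x h ≫ φ = x ≫ φ) ∧
  ∀ (Z : SchemeOver k) (u : X.carrier ⟶ Z.carrier), u ≫ Z.str = X.str →
    (∀ {T : Scheme.{u}} (g : T ⟶ I.carrier) (x : T ⟶ X.carrier) (h),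
      α.act g x h ≫ u = x ≫ u) →
    ∃! v : Q.carrier ⟶ Z.carrier, φ ≫ v = u

/-- Data exhibiting the Frobenius twist `G^{(pⁿ)}` of a group scheme `G` over `k`, as a group
scheme, together with the relative Frobenius homomorphism. -/
structure TwistedGroupData (k : Type u) [Field k] (p : ℕ) [Fact p.Prime] [CharP k p] (n : ℕ)
    (G : GroupSchemeOver k) where
  tw : GroupSchemeOver k
  pr : tw.carrier ⟶ G.carrier
  is_pullback : IsPullback pr tw.str G.str (frobSpec k p n)
  pr_mul : ∀ {T : Scheme.{u}} (a b : T ⟶ tw.carrier) (h h'),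
    tw.mul a b h ≫ pr = G.mul (a ≫ pr) (b ≫ pr) h'
  rel : GroupHom G tw
  abs : G.carrier ⟶ G.carrier
  abs_frob : IsAbsoluteFrobenius G.carrier (p ^ n) abs
  rel_pr : rel.hom ≫ pr = abs

/-- Data exhibiting the Frobenius twist of an action: the induced action of `G^{(pⁿ)}` on
`X^{(pⁿ)}`, compatible with the projections and with the relative Frobenii. -/
structure TwistedActionData {k : Type u} [Field k] {p : ℕ} [Fact p.Prime] [CharP k p] {n : ℕ}
    {G : GroupSchemeOver k} {X : SchemeOver k} (α : ActionOver G X)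
    (GT : TwistedGroupData k p n G) (FD : FrobeniusData k p n X) where
  tact : ActionOver GT.tw FD.tw
  compat : ∀ {T : Scheme.{u}} (g : T ⟶ GT.tw.carrier) (x : T ⟶ FD.tw.carrier) (h h'),
    tact.act g x h ≫ FD.pr = α.act (g ≫ GT.pr) (x ≫ FD.pr) h'
  rel_equivariant : ∀ {T : Scheme.{u}} (g : T ⟶ G.carrier) (x : T ⟶ X.carrier) (h h'),
    α.act g x h ≫ FD.rel = tact.act (g ≫ GT.rel.hom) (x ≫ FD.rel) h'

/-!
For an infinitesimal group scheme `I` the augmentation ideal of its coordinate ring is nilpotent,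
so some power `F^n` of the Frobenius kills `I`. For every such `n` the relative Frobenius
`F : X ⟶ X^{(pⁿ)}` is `I`-invariant, and it is finite, surjective and radicial. The `I`-invariant
functions therefore form a quasi-coherent algebra between `𝒪_{X^{(pⁿ)}}` and `F_* 𝒪_X`, whose
relative spectrum `Q` factors `F` as `X ⟶ Q ⟶ X^{(pⁿ)}` with both maps finite, surjective and
radicial. Because `F` is closed and injective, every point of `X^{(pⁿ)}` has an affine
neighbourhood whose preimage in `X` is mapped into an affine open by a given invariant morphism
`u`; over it `u` descends to `Q` because the functions it pulls back are invariant. These local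
descents glue, as `X ⟶ Q` remains an epimorphism over every open subscheme.
-/

section SchemeMorphisms

variable {X Y Z : Scheme.{u}}

theorem hom_ext_of_appLE {f g : X ⟶ Y} (hbase : f.base = g.base)
    (happ : ∀ (U : Y.Opens) (V : X.Opens) (hf : V ≤ f ⁻¹ᵁ U) (hg : V ≤ g ⁻¹ᵁ U),
      f.appLE U V hf = g.appLE U V hg) : f = g := by
  refine Scheme.Hom.ext hbase fun U ↦ ?_
  rw [Scheme.Hom.app_eq_appLE, Scheme.Hom.app_eq_appLE, Scheme.Hom.appLE_map, happ U]

theorem hom_ext_of_isOpenCover {f g : X ⟶ Y} {ι : Type u} {U : ι → X.Opens}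
    (hU : TopologicalSpace.IsOpenCover U) (h : ∀ i, (U i).ι ≫ f = (U i).ι ≫ g) : f = g :=
  Scheme.Cover.hom_ext (X.openCoverOfIsOpenCover U hU) _ _ h

theorem isOpenCover_preimage_affineOpens (f : X ⟶ Y) :
    TopologicalSpace.IsOpenCover fun U : Y.affineOpens ↦ f ⁻¹ᵁ U.1 :=
  .comap (iSup_affineOpens_eq_top Y) f.base.1

theorem epi_of_isSchemeTheoreticallyDominant (f : X ⟶ Y) [IsSchemeTheoreticallyDominant f]
    [QuasiCompact f] [Surjective f] : Epi f := by
  refine ⟨fun g h e ↦ hom_ext_of_appLE ?_ fun U V hg hh ↦ ?_⟩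
  · ext y
    obtain ⟨x, rfl⟩ := f.surjective y
    exact congr(($e).base x)
  · ext s
    apply f.app_injective
    have hfs : (f ≫ g).appLE U (f ⁻¹ᵁ V) (f.preimage_mono hg) s =
        (f ≫ h).appLE U (f ⁻¹ᵁ V) (f.preimage_mono hh) s := by simp only [e]
    rwa [← Scheme.Hom.appLE_comp_appLE f g U V _ hg le_rfl,
      ← Scheme.Hom.appLE_comp_appLE f h U V _ hh le_rfl, ← Scheme.Hom.app_eq_appLE] at hfs

theorem universallyInjective_iff_forall_field (f : X ⟶ Y) :
    UniversallyInjective f ↔ ∀ (K : Type u) [Field K] (x y : Spec (.of K) ⟶ X),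
      x ≫ f = y ≫ f → x = y :=
  (tfae_universallyInjective f).out 0 1

theorem universallyInjective_of_comp (f : X ⟶ Y) (g : Y ⟶ Z) [UniversallyInjective (f ≫ g)] :
    UniversallyInjective f := by
  rw [universallyInjective_iff_forall_field]
  intro K _ x y h
  refine (universallyInjective_iff_forall_field (f ≫ g)).mp inferInstance K x y ?_
  rw [← Category.assoc, h, Category.assoc]

theorem universallyInjective_of_comp_of_surjective (f : X ⟶ Y) (g : Y ⟶ Z) [Surjective f]
    [UniversallyInjective (f ≫ g)] : UniversallyInjective g := by
  refine ⟨fun {_ _} i₁ i₂ g' sq y₁ y₂ h ↦ ?_⟩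
  have sq' : IsPullback (pullback.snd f i₁ ≫ g') (pullback.fst f i₁) i₂ (f ≫ g) :=
    ((IsPullback.of_hasPullback f i₁).paste_vert sq.flip).flip
  obtain ⟨x₁, rfl⟩ := (pullback.snd f i₁).surjective y₁
  obtain ⟨x₂, rfl⟩ := (pullback.snd f i₁).surjective y₂
  have hinj := UniversallyInjective.universally_injective (f := f ≫ g) _ _ _ sq'
  rw [hinj (a₁ := x₁) (a₂ := x₂) (by simpa using h)]

theorem quasiCompact_of_comp_of_surjective (f : X ⟶ Y) (g : Y ⟶ Z) [Surjective f]
    [QuasiCompact (f ≫ g)] : QuasiCompact g := by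
  refine ⟨fun U hU hc ↦ ?_⟩
  rw [← Set.image_preimage_eq (g ⁻¹' U) f.surjective]
  exact (QuasiCompact.isCompact_preimage (f := f ≫ g) U hU hc).image f.continuous

end SchemeMorphisms

section AbsoluteFrobenius

/-- The `p ^ n`-power endomorphism of a ring in which `p = 0`. Unlike `iterateFrobenius`, it
makes sense for the zero ring, the ring of sections over the empty open subset. -/
def iterateFrobeniusOfCastEqZero (R : Type*) [CommRing R] {p : ℕ} [hp : Fact p.Prime]
    (h : (p : R) = 0) (n : ℕ) : R →+* R where
  toFun a := a ^ p ^ n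
  map_one' := one_pow _
  map_mul' a b := mul_pow a b _
  map_zero' := zero_pow (pow_ne_zero _ hp.out.ne_zero)
  map_add' a b := by
    rcases subsingleton_or_nontrivial R with hR | hR
    · exact Subsingleton.elim _ _
    · have : CharP R p := ringChar.of_eq (CharP.ringChar_of_prime_eq_zero hp.out h)
      exact add_pow_char_pow a b p n

theorem natCast_eq_zero_of_hom {X Y : Scheme.{u}} (f : X ⟶ Y) {m : ℕ}
    (h : (m : Γ(Y, ⊤)) = 0) : (m : Γ(X, ⊤)) = 0 := by
  simpa using congr(f.appTop.hom $h)

theorem natCast_eq_zero_of_top {X : Scheme.{u}} {m : ℕ} (h : (m : Γ(X, ⊤)) = 0)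
    (U : X.Opens) : (m : Γ(X, U)) = 0 := by
  simpa using congr((X.presheaf.map (homOfLE le_top : U ⟶ ⊤).op).hom $h)

theorem natCast_eq_zero_of_str (p : ℕ) [CharP k p] {X : Scheme.{u}} (s : X ⟶ Spk k) :
    (p : Γ(X, ⊤)) = 0 := by
  refine natCast_eq_zero_of_hom s ?_
  rw [← map_natCast (Scheme.ΓSpecIso (CommRingCat.of k)).inv.hom]
  exact (congrArg _ (CharP.cast_eq_zero k p)).trans (map_zero _)

variable {X Y : Scheme.{u}} {p q : ℕ} [hp : Fact p.Prime]

/-- The absolute Frobenius as a morphism of presheafed spaces. -/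
def absoluteFrobeniusPresheafed (X : Scheme.{u}) (h : (p : Γ(X, ⊤)) = 0) (n : ℕ) :
    X.toPresheafedSpace ⟶ X.toPresheafedSpace where
  base := 𝟙 _
  c :=
    { app U := CommRingCat.ofHom
        (iterateFrobeniusOfCastEqZero Γ(X, U.unop) (natCast_eq_zero_of_top h _) n)
      naturality _ _ i := by
        ext a
        exact (map_pow (X.presheaf.map i).hom a _).symm }

theorem absoluteFrobeniusPresheafed_stalkMap (h : (p : Γ(X, ⊤)) = 0) (n : ℕ) (x : X)
    (a : X.presheaf.stalk x) :
    ((absoluteFrobeniusPresheafed X h n).stalkMap x).hom a = a ^ p ^ n := by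
  obtain ⟨U, hx, s, rfl⟩ := X.presheaf.exists_germ_eq (x := x) a
  rw [← map_pow]
  exact congr($(PresheafedSpace.stalkMap_germ (absoluteFrobeniusPresheafed X h n) U x hx) s)

/-- The absolute `p ^ n`-power Frobenius of a scheme on which `p = 0`. -/
def absoluteFrobenius (X : Scheme.{u}) (h : (p : Γ(X, ⊤)) = 0) (n : ℕ) : X ⟶ X :=
  ⟨⟨absoluteFrobeniusPresheafed X h n, fun x ↦ ⟨fun a ha ↦ by
    have ha' : IsUnit ((show X.presheaf.stalk x from a) ^ p ^ n) :=
      absoluteFrobeniusPresheafed_stalkMap h n x a ▸ ha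
    exact (isUnit_pow_iff (pow_ne_zero _ hp.out.ne_zero)).mp ha'⟩⟩⟩

theorem isAbsoluteFrobenius_absoluteFrobenius (h : (p : Γ(X, ⊤)) = 0) (n : ℕ) :
    IsAbsoluteFrobenius X (p ^ n) (absoluteFrobenius X h n) := by
  refine ⟨fun _ ↦ rfl, fun U e a ↦ ?_⟩
  exact congr($((X.presheaf.map_id (op U)).symm).hom (a ^ p ^ n))

namespace IsAbsoluteFrobenius

variable {F : X ⟶ X} {G : Y ⟶ Y}

theorem preimage_eq (hF : IsAbsoluteFrobenius X q F) (U : X.Opens) : F ⁻¹ᵁ U = U := by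
  ext x
  change F.base x ∈ U ↔ x ∈ U
  rw [hF.1]

theorem appLE_apply (hF : IsAbsoluteFrobenius X q F) {U V : X.Opens} (hV : V ≤ F ⁻¹ᵁ U)
    (hVU : V ≤ U) (a : Γ(X, U)) :
    F.appLE U V hV a = X.presheaf.map (homOfLE hVU).op (a ^ q) := by
  rw [Scheme.Hom.appLE, CommRingCat.comp_apply, hF.2 U (by rw [hF.preimage_eq]) a,
    ← CommRingCat.comp_apply, ← X.presheaf.map_comp]
  rfl

theorem appLE_self_apply (hF : IsAbsoluteFrobenius X q F) (U : X.Opens)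
    (a : Γ(X, U)) : F.appLE U U (hF.preimage_eq U).ge a = a ^ q := by
  rw [hF.appLE_apply _ le_rfl, show (homOfLE (le_refl U)).op = 𝟙 _ from rfl, X.presheaf.map_id,
    CommRingCat.id_apply]

theorem comp_comm (hF : IsAbsoluteFrobenius X q F) (hG : IsAbsoluteFrobenius Y q G)
    (f : X ⟶ Y) : F ≫ f = f ≫ G := by
  refine hom_ext_of_appLE ?_ fun U V hFf hfG ↦ ?_
  · ext x
    change f.base (F.base x) = G.base (f.base x)
    rw [hF.1, hG.1]
  · rw [Scheme.Hom.comp_preimage] at hFf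
    have hV : V ≤ f ⁻¹ᵁ U := by rwa [hF.preimage_eq] at hFf
    ext s
    rw [← Scheme.Hom.appLE_comp_appLE F f U (f ⁻¹ᵁ U) V le_rfl hFf,
      ← Scheme.Hom.appLE_comp_appLE f G U U V (hG.preimage_eq U).ge hV, CommRingCat.comp_apply,
      CommRingCat.comp_apply, hF.appLE_apply _ hV, hG.appLE_self_apply, ← map_pow,
      ← CommRingCat.comp_apply, Scheme.Hom.appLE_map]

theorem unique {F' : X ⟶ X} (hF : IsAbsoluteFrobenius X q F)
    (hF' : IsAbsoluteFrobenius X q F') : F = F' := by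
  simpa using hF.comp_comm hF' (𝟙 X)

theorem isIntegralHom (hF : IsAbsoluteFrobenius X q F) (hq : 0 < q) : IsIntegralHom F := by
  have : IsAffineHom F := ⟨fun U hU ↦ by rwa [hF.preimage_eq]⟩
  refine ⟨fun U _ s ↦ ?_⟩
  have hU : F ⁻¹ᵁ U = U := hF.preimage_eq U
  let t : Γ(X, U) := X.presheaf.map (homOfLE hU.ge).op s
  have hst : F.app U t = s ^ q := by
    rw [Scheme.Hom.app_eq_appLE, hF.appLE_apply _ hU.le, map_pow, ← CommRingCat.comp_apply,
      ← X.presheaf.map_comp, Subsingleton.elim (_ ≫ _) (𝟙 _), X.presheaf.map_id,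
      CommRingCat.id_apply]
  algebraize [(F.app U).hom]
  exact IsIntegral.of_pow hq (hst ▸ isIntegral_algebraMap (x := t))

theorem surjective (hF : IsAbsoluteFrobenius X q F) : Surjective F :=
  ⟨fun x ↦ ⟨x, hF.1 x⟩⟩

theorem epi [IsReduced X] (hF : IsAbsoluteFrobenius X q F) (hq : 0 < q) : Epi F := by
  have := hF.isIntegralHom hq
  have := hF.surjective
  have := IsSchemeTheoreticallyDominant.of_isDominant F
  exact epi_of_isSchemeTheoreticallyDominant F

theorem universallyInjective {n : ℕ} (hF : IsAbsoluteFrobenius X (p ^ n) F)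
    (h : (p : Γ(X, ⊤)) = 0) : UniversallyInjective F := by
  rw [universallyInjective_iff_forall_field]
  intro K _ x y hxy
  have hK := isAbsoluteFrobenius_absoluteFrobenius (natCast_eq_zero_of_hom x h) n
  have := hK.epi (pow_pos hp.out.pos n)
  rw [← cancel_epi (absoluteFrobenius _ (natCast_eq_zero_of_hom x h) n), hK.comp_comm hF,
    hK.comp_comm hF, hxy]

end IsAbsoluteFrobenius

end AbsoluteFrobenius

section RelativeFrobenius

variable {p : ℕ} [hp : Fact p.Prime] [CharP k p] {n : ℕ} {X : SchemeOver k}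

theorem isAbsoluteFrobenius_frobSpec (k : Type u) [Field k] (p : ℕ) [Fact p.Prime] [CharP k p]
    (n : ℕ) : IsAbsoluteFrobenius (Spk k) (p ^ n) (frobSpec k p n) := by
  have h := natCast_eq_zero_of_str p (𝟙 (Spk k))
  suffices frobSpec k p n = absoluteFrobenius (Spk k) h n from
    this ▸ isAbsoluteFrobenius_absoluteFrobenius h n
  refine ext_of_isAffine (ConcreteCategory.hom_ext _ _ fun a ↦ ?_)
  obtain ⟨b, rfl⟩ :=
    (ConcreteCategory.bijective_of_isIso (Scheme.ΓSpecIso (CommRingCat.of k)).inv).2 a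
  rw [frobSpec, ← CommRingCat.comp_apply, ← Scheme.ΓSpecIso_inv_naturality]
  exact map_pow (Scheme.ΓSpecIso (CommRingCat.of k)).inv.hom b (p ^ n)

theorem IsAbsoluteFrobenius.comp_str {F : X.carrier ⟶ X.carrier}
    (hF : IsAbsoluteFrobenius X.carrier (p ^ n) F) : F ≫ X.str = X.str ≫ frobSpec k p n :=
  hF.comp_comm (isAbsoluteFrobenius_frobSpec k p n) _

namespace FrobeniusData

/-- The Frobenius twist as the chosen pullback, with the induced relative Frobenius. -/
def ofPullback (k : Type u) [Field k] (p : ℕ) [Fact p.Prime] [CharP k p] (n : ℕ)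
    (X : SchemeOver k) : FrobeniusData k p n X where
  tw := ⟨pullback X.str (frobSpec k p n), pullback.snd _ _⟩
  pr := pullback.fst _ _
  is_pullback := IsPullback.of_hasPullback _ _
  rel := pullback.lift (absoluteFrobenius X.carrier (natCast_eq_zero_of_str p X.str) n) X.str
    (isAbsoluteFrobenius_absoluteFrobenius _ _).comp_str
  rel_str := pullback.lift_snd _ _ _
  abs := absoluteFrobenius X.carrier (natCast_eq_zero_of_str p X.str) n
  abs_frob := isAbsoluteFrobenius_absoluteFrobenius _ _
  rel_pr := pullback.lift_fst _ _ _

variable (FD : FrobeniusData k p n X)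

theorem universallyInjective_rel : UniversallyInjective FD.rel := by
  have := FD.abs_frob.universallyInjective (natCast_eq_zero_of_str p X.str)
  rw [← FD.rel_pr] at this
  exact universallyInjective_of_comp FD.rel FD.pr

theorem surjective_rel : Surjective FD.rel := by
  have : UniversallyInjective (frobSpec k p n) :=
    (isAbsoluteFrobenius_frobSpec k p n).universallyInjective
      (natCast_eq_zero_of_str p (𝟙 (Spk k)))
  have : UniversallyInjective FD.pr := MorphismProperty.of_isPullback FD.is_pullback.flip this
  refine ⟨fun y ↦ ⟨FD.pr y, FD.pr.injective ?_⟩⟩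
  rw [← Scheme.Hom.comp_apply, FD.rel_pr]
  exact FD.abs_frob.1 _

theorem isFinite_rel [LocallyOfFiniteType X.str] : IsFinite FD.rel := by
  have : IsAffineHom FD.pr := MorphismProperty.of_isPullback FD.is_pullback.flip inferInstance
  have : IsIntegralHom (FD.rel ≫ FD.pr) :=
    FD.rel_pr ▸ FD.abs_frob.isIntegralHom (pow_pos hp.out.pos n)
  have : LocallyOfFiniteType (FD.rel ≫ FD.tw.str) := FD.rel_str ▸ inferInstance
  exact (IsFinite.iff_isIntegralHom_and_locallyOfFiniteType _).mpr
    ⟨.of_comp FD.rel FD.pr, locallyOfFiniteType_of_comp FD.rel FD.tw.str⟩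

theorem locallyOfFiniteType_tw_str [LocallyOfFiniteType X.str] : LocallyOfFiniteType FD.tw.str :=
  MorphismProperty.of_isPullback FD.is_pullback inferInstance

end FrobeniusData

end RelativeFrobenius

section Height

theorem isNilpotent_of_appTop_eq_zero {X Y : Scheme.{u}} [CompactSpace Y] (f : X ⟶ Y)
    [Surjective f] {s : Γ(Y, ⊤)} (hs : f.appTop s = 0) : IsNilpotent s := by
  rw [Scheme.isNilpotent_iff_basicOpen_eq_bot, eq_bot_iff]
  intro y hy
  obtain ⟨x, rfl⟩ := f.surjective y
  have hx : x ∈ f ⁻¹ᵁ Y.basicOpen s := hy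
  rw [Scheme.preimage_basicOpen_top, hs, Scheme.basicOpen_zero] at hx
  exact hx.elim

variable {p : ℕ} [hp : Fact p.Prime] [CharP k p] {n : ℕ} {I : GroupSchemeOver k}

theorem frobKillsAt_iff {F : I.carrier ⟶ I.carrier}
    (hF : IsAbsoluteFrobenius I.carrier (p ^ n) F) :
    FrobKillsAt k p I n ↔ F = I.str ≫ frobSpec k p n ≫ I.one := by
  refine ⟨fun hn ↦ ?_, fun h FD ↦ ?_⟩
  · let FD := FrobeniusData.ofPullback k p n I.toSchemeOver
    obtain ⟨u, hpr, -, hrel⟩ := hn FD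
    rw [hF.unique FD.abs_frob, ← FD.rel_pr, hrel, Category.assoc, hpr]
  · have w : (frobSpec k p n ≫ I.one) ≫ I.str = 𝟙 _ ≫ frobSpec k p n := by
      rw [Category.assoc, I.one_str, Category.comp_id, Category.id_comp]
    refine ⟨FD.is_pullback.lift _ _ w, FD.is_pullback.lift_fst _ _ w,
      FD.is_pullback.lift_snd _ _ w, FD.is_pullback.hom_ext ?_ ?_⟩
    · rw [FD.rel_pr, Category.assoc, FD.is_pullback.lift_fst, FD.abs_frob.unique hF, h]
    · rw [FD.rel_str, Category.assoc, FD.is_pullback.lift_snd, Category.comp_id]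

theorem FrobKillsAt.act_comp_rel (hn : FrobKillsAt k p I n) {X : SchemeOver k}
    (α : ActionOver I X) (FD : FrobeniusData k p n X) {T : Scheme.{u}} (g : T ⟶ I.carrier)
    (x : T ⟶ X.carrier) (h) : α.act g x h ≫ FD.rel = x ≫ FD.rel := by
  have hFI := isAbsoluteFrobenius_absoluteFrobenius (natCast_eq_zero_of_str p I.str) n
  have hF := isAbsoluteFrobenius_absoluteFrobenius (natCast_eq_zero_of_str p (x ≫ X.str)) n
  set F := absoluteFrobenius T (natCast_eq_zero_of_str p (x ≫ X.str)) n
  have hg : F ≫ g = (F ≫ x) ≫ X.str ≫ I.one := by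
    rw [hF.comp_comm hFI, (frobKillsAt_iff hFI).mp hn, reassoc_of% h, Category.assoc,
      ← reassoc_of% FD.abs_frob.comp_str, ← reassoc_of% hF.comp_comm FD.abs_frob x]
  have hgx : (F ≫ g) ≫ I.str = (F ≫ x) ≫ X.str := by rw [Category.assoc, h, Category.assoc]
  refine FD.is_pullback.hom_ext ?_ ?_
  · calc (α.act g x h ≫ FD.rel) ≫ FD.pr = F ≫ α.act g x h := by
          rw [Category.assoc, FD.rel_pr, hF.comp_comm FD.abs_frob]
      _ = α.act (F ≫ g) (F ≫ x) hgx := α.act_natural _ _ _ _ _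
      _ = α.act ((F ≫ x) ≫ X.str ≫ I.one) (F ≫ x) (hg ▸ hgx) := α.act_congr hg rfl _ _
      _ = F ≫ x := α.one_act _ _
      _ = (x ≫ FD.rel) ≫ FD.pr := by rw [hF.comp_comm FD.abs_frob, Category.assoc, FD.rel_pr]
  · rw [Category.assoc, Category.assoc, FD.rel_str, α.act_str]

theorem frobKillsAt_of_forall_pow_eq_zero [IsAffine I.carrier]
    (h : ∀ s : Γ(I.carrier, ⊤), I.one.appTop s = 0 → s ^ p ^ n = 0) : FrobKillsAt k p I n := by
  have hp0 := natCast_eq_zero_of_str p I.str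
  have hF := isAbsoluteFrobenius_absoluteFrobenius hp0 n
  rw [frobKillsAt_iff hF, ← reassoc_of% hF.comp_str (X := I.toSchemeOver)]
  refine ext_of_isAffine (ConcreteCategory.hom_ext _ _ fun s ↦ ?_)
  set t := I.str.appTop (I.one.appTop s)
  have hst : I.one.appTop (s - t) = 0 := by
    rw [map_sub, sub_eq_zero]
    exact congr(($(I.one_str)).appTop (I.one.appTop s)).symm
  have hpow : s ^ p ^ n - t ^ p ^ n = 0 :=
    (map_sub (iterateFrobeniusOfCastEqZero _ hp0 n) s t).symm.trans (h _ hst)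
  exact sub_eq_zero.mp hpow

namespace GroupSchemeOver.IsInfinitesimal

theorem surjective_one (hI : I.IsInfinitesimal) : Surjective I.one :=
  have := hI.2.2
  ⟨fun _ ↦ ⟨Classical.arbitrary _, I.str.injective (Subsingleton.elim _ _)⟩⟩

theorem exists_frobKillsAt (p : ℕ) [hp : Fact p.Prime] [CharP k p] (hI : I.IsInfinitesimal) :
    ∃ n, FrobKillsAt k p I n := by
  have := hI.2.1
  have := hI.surjective_one
  have : IsAffine I.carrier := isAffine_of_isAffineHom I.str
  have : IsLocallyNoetherian I.carrier := LocallyOfFiniteType.isLocallyNoetherian I.str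
  have : IsNoetherianRing Γ(I.carrier, ⊤) :=
    IsLocallyNoetherian.component_noetherian ⟨⊤, isAffineOpen_top _⟩
  obtain ⟨m, hm⟩ := IsNoetherianRing.isNilpotent_nilradical Γ(I.carrier, ⊤)
  refine ⟨m, frobKillsAt_of_forall_pow_eq_zero fun s hs ↦ ?_⟩
  have hsm : s ^ m ∈ nilradical Γ(I.carrier, ⊤) ^ m :=
    Ideal.pow_mem_pow (isNilpotent_of_appTop_eq_zero I.one hs) m
  rw [hm] at hsm
  exact pow_eq_zero_of_le (Nat.lt_pow_self hp.out.one_lt).le hsm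

end GroupSchemeOver.IsInfinitesimal

end Height

section Equalizers

variable {A A' B C C' : Type*} [CommRing A] [CommRing A'] [CommRing B] [CommRing C] [CommRing C']

theorem ringHom_finite_of_comp_of_injective [IsNoetherianRing A] {f : A →+* B} {g : B →+* C}
    (hg : Function.Injective g) (hgf : (g.comp f).Finite) : f.Finite := by
  algebraize [f, g, g.comp f]
  exact Module.Finite.of_injective (IsScalarTower.toAlgHom A B C).toLinearMap hg

theorem exists_comp_eq_of_range_le {f : A →+* C} {g : B →+* C} (hg : Function.Injective g)
    (h : f.range ≤ g.range) : ∃ l : A →+* B, g.comp l = f := by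
  let e : B ≃+* g.range := RingEquiv.ofBijective g.rangeRestrict
    ⟨fun x y hxy ↦ hg congr(($hxy : C)), g.rangeRestrict_surjective⟩
  refine ⟨(e.symm : g.range →+* B).comp ((Subring.inclusion h).comp f.rangeRestrict),
    RingHom.ext fun x ↦ ?_⟩
  exact congr(($(e.apply_symm_apply (Subring.inclusion h (f.rangeRestrict x))) : C))

theorem injective_of_comp_eq_subtype {S : Subring C} {g : A →+* C} {e : S ≃+* A}
    (h : g.comp (e : S →+* A) = S.subtype) : Function.Injective g := by
  have hge : g ∘ e = S.subtype := congr(⇑$h)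
  exact .of_comp_right (hge ▸ S.subtype_injective) e.surjective

theorem range_eq_of_comp_eq_subtype {S : Subring C} {g : A →+* C} {e : S ≃+* A}
    (h : g.comp (e : S →+* A) = S.subtype) : g.range = S := by
  have hge : g ∘ e = S.subtype := congr(⇑$h)
  refine SetLike.coe_injective ?_
  rw [RingHom.coe_range, ← e.surjective.range_comp, hge, ← RingHom.coe_range, S.range_subtype]

/-- The map between the equalizer subrings of two parallel pairs `a, p : A →+* C` and
`a', p' : A' →+* C'` induced by a morphism `(l, m)` of parallel pairs. -/
def eqLocusMap {a p : A →+* C} {a' p' : A' →+* C'} (l : A →+* A') (m : C →+* C')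
    (ha : a'.comp l = m.comp a) (hp : p'.comp l = m.comp p) : a.eqLocus p →+* a'.eqLocus p' :=
  l.restrict _ _ fun x (hx : a x = p x) ↦
    (congr($ha x).trans congr(m $hx)).trans congr($hp x).symm

variable {a p : A →+* C} {a' p' : A' →+* C'} [Algebra A A'] [Algebra C C']

theorem exists_mul_pow_eq_of_mem_eqLocus
    (ha : a'.comp (algebraMap A A') = (algebraMap C C').comp a)
    (hp : p'.comp (algebraMap A A') = (algebraMap C C').comp p)
    {t : A} (ht : a t = p t) [IsLocalization.Away t A'] [IsLocalization.Away (p t) C']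
    {s : A'} (hs : a' s = p' s) :
    ∃ (n : ℕ) (x : A), a x = p x ∧ s * algebraMap A A' t ^ n = algebraMap A A' x := by
  have haa (x : A) : a' (algebraMap A A' x) = algebraMap C C' (a x) := congr($ha x)
  have hpp (x : A) : p' (algebraMap A A' x) = algebraMap C C' (p x) := congr($hp x)
  obtain ⟨n, y, hy⟩ := IsLocalization.Away.surj t s
  have hay : algebraMap C C' (a y) = algebraMap C C' (p y) := by
    rw [← haa, ← hpp, ← hy, map_mul, map_mul, hs, map_pow, map_pow, haa, hpp, ht]
  obtain ⟨m, hm⟩ := IsLocalization.Away.exists_of_eq (p t) hay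
  refine ⟨n + m, t ^ m * y, ?_, ?_⟩
  · rw [map_mul, map_mul, map_pow, map_pow, ht, hm]
  · rw [pow_add, ← mul_assoc, hy, map_mul, map_pow, mul_comm]

theorem isLocalizationAway_eqLocus
    (ha : a'.comp (algebraMap A A') = (algebraMap C C').comp a)
    (hp : p'.comp (algebraMap A A') = (algebraMap C C').comp p)
    {t : A} (ht : a t = p t) [IsLocalization.Away t A'] [IsLocalization.Away (p t) C'] :
    letI := (eqLocusMap (algebraMap A A') (algebraMap C C') ha hp).toAlgebra
    IsLocalization.Away (⟨t, ht⟩ : a.eqLocus p) (a'.eqLocus p') := by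
  let φ := eqLocusMap (algebraMap A A') (algebraMap C C') ha hp
  let := φ.toAlgebra
  have hunit : IsUnit (φ ⟨t, ht⟩) :=
    (a'.isUnit_eqLocus_mk_iff p' (φ ⟨t, ht⟩).2).mpr (IsLocalization.Away.algebraMap_isUnit t)
  refine IsLocalization.Away.mk _ hunit (fun ⟨s, hs⟩ ↦ ?_) (fun ⟨x, hx⟩ ⟨y, hy⟩ hxy ↦ ?_)
  · obtain ⟨n, x, hx, hsx⟩ := exists_mul_pow_eq_of_mem_eqLocus ha hp ht hs
    exact ⟨n, ⟨x, hx⟩, Subtype.ext hsx⟩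
  · obtain ⟨n, hn⟩ := IsLocalization.Away.exists_of_eq t (S := A') congr(($hxy : A'))
    exact ⟨n, Subtype.ext hn⟩

end Equalizers

section RelativeSpec

theorem toSpecΓ_comp_SpecMap_injective {X : Scheme.{u}} (V : X.Opens) (R : CommRingCat.{u}) :
    Function.Injective fun g : R ⟶ Γ(X, V) ↦ V.toSpecΓ ≫ Spec.map g := by
  intro g g' h
  have h' := congr(Scheme.Hom.appTop $h)
  simpa only [Scheme.Hom.comp_appTop, Scheme.Opens.toSpecΓ_appTop, Iso.cancel_iso_inv_right,
    Iso.cancel_iso_hom_left, Scheme.ΓSpecIso_naturality_assoc] using h'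

open Scheme.AffineZariskiSite

variable {X Y : Scheme.{u}} {F : Y.Opensᵒᵖ ⥤ CommRingCat.{u}} {α : Y.presheaf ⟶ F}
  (hα : ((toOpensFunctor Y).op.whiskerLeft α).Coequifibered)

instance : ((relativeGluingData hα).functor ⋙ Scheme.forget).IsLocallyDirected :=
  Scheme.Cover.RelativeGluingData.instIsLocallyDirectedI₀CompFunctorForgetOfIsThin ..

/-- The relative spectrum over `Y` of a presheaf `F` of `𝒪_Y`-algebras which is quasi-coherent on
affine opens: that `α : 𝒪_Y ⟶ F` is coequifibered there says `F(D(r)) = F(U)[1/r]`. -/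
def relativeSpec : Scheme.{u} :=
  (relativeGluingData hα).glued

namespace relativeSpec

/-- The structure morphism of the relative spectrum. -/
def toBase : relativeSpec hα ⟶ Y :=
  (relativeGluingData hα).toBase

/-- The open immersion of `Spec F(U)` into the relative spectrum of `F`, for `U` affine open. -/
def chart (U : Y.affineOpens) : Spec (F.obj (op U.1)) ⟶ relativeSpec hα :=
  (relativeGluingData hα).cover.f U

instance (U : Y.affineOpens) : IsOpenImmersion (chart hα U) :=
  (relativeGluingData hα).cover.map_prop U

theorem chart_toBase (U : Y.affineOpens) :
    chart hα U ≫ toBase hα = Spec.map (α.app (op U.1)) ≫ U.2.fromSpec :=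
  colimit.ι_desc _ _

theorem map_chart {U V : Y.AffineZariskiSite} (i : U ⟶ V) :
    Spec.map (F.map (homOfLE (toOpens_mono i.le)).op) ≫ chart hα V = chart hα U :=
  colimit.w (relativeGluingData hα).functor i

theorem toBase_preimage (U : Y.affineOpens) :
    toBase hα ⁻¹ᵁ U.1 = (chart hα U).opensRange := by
  simpa using! (relativeGluingData hα).toBase_preimage_eq_opensRange_ι U

instance : IsAffineHom (toBase hα) where
  isAffine_preimage U hU := by
    let V : Y.affineOpens := ⟨U, hU⟩
    rw [show U = V.1 from rfl, toBase_preimage hα V]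
    exact isAffineOpen_opensRange (chart hα V)

theorem exists_sectionsIso (U : Y.affineOpens) :
    ∃ e : F.obj (op U.1) ≅ Γ(relativeSpec hα, toBase hα ⁻¹ᵁ U.1),
      (toBase hα ⁻¹ᵁ U.1).toSpecΓ ≫ Spec.map e.hom ≫ chart hα U = (toBase hα ⁻¹ᵁ U.1).ι := by
  let V := toBase hα ⁻¹ᵁ U.1
  have hV : IsAffineOpen V := U.2.preimage (toBase hα)
  let j : V.toScheme ≅ Spec (F.obj (op U.1)) := IsOpenImmersion.isoOfRangeEq V.ι (chart hα U) (by
    simp [V, toBase_preimage])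
  let e := (Scheme.Spec.preimageIso (hV.isoSpec.symm ≪≫ j)).unop
  have he : Spec.map e.hom = hV.isoSpec.inv ≫ j.hom := Scheme.Spec.map_preimage _
  refine ⟨e, ?_⟩
  rw [he, ← hV.isoSpec_hom, Category.assoc, Iso.hom_inv_id_assoc]
  exact IsOpenImmersion.isoOfRangeEq_hom_fac ..

variable (f : X ⟶ Y)
  (β : F ⟶ (TopCat.Presheaf.pushforward CommRingCat f.base).obj X.presheaf)

/-- The morphism from `f⁻¹(U)` to the relative spectrum of `F` given by a morphism `F ⟶ f_* 𝒪_X`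
of `𝒪_Y`-algebras. -/
def localLift (U : Y.affineOpens) : (f ⁻¹ᵁ U.1).toScheme ⟶ relativeSpec hα :=
  (f ⁻¹ᵁ U.1).toSpecΓ ≫ Spec.map (β.app (op U.1)) ≫ chart hα U

theorem homOfLE_localLift {U V : Y.AffineZariskiSite} (i : U ⟶ V) :
    X.homOfLE (f.preimage_mono (toOpens_mono i.le)) ≫ localLift hα f β V =
      localLift hα f β U := by
  have hβ := congr((f ⁻¹ᵁ U.1).toSpecΓ ≫
    Spec.map $(β.naturality (homOfLE (toOpens_mono i.le)).op) ≫ chart hα V)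
  rw [Spec.map_comp, Spec.map_comp, Category.assoc, Category.assoc, map_chart hα i] at hβ
  refine Eq.trans ?_ hβ.symm
  exact (Scheme.Opens.toSpecΓ_SpecMap_presheaf_map_assoc _ _ _ _).symm

theorem comp_pullbackRestrictIsoRestrict_localLift {U V : Y.AffineZariskiSite} (i : U ⟶ V)
    {t : pullback f U.1.ι ⟶ pullback f V.1.ι} (ht : t ≫ pullback.fst _ _ = pullback.fst _ _) :
    t ≫ (pullbackRestrictIsoRestrict f V.1).hom ≫ localLift hα f β V =
      (pullbackRestrictIsoRestrict f U.1).hom ≫ localLift hα f β U := by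
  rw [← homOfLE_localLift hα f β i, ← Category.assoc, ← Category.assoc]
  congr 1
  rw [← cancel_mono (Scheme.Opens.ι _), Category.assoc, Category.assoc, Scheme.homOfLE_ι,
    pullbackRestrictIsoRestrict_hom_ι, pullbackRestrictIsoRestrict_hom_ι, ht]

/-- The morphism from `X` to the relative spectrum of `F` given by a morphism `F ⟶ f_* 𝒪_X` of
`𝒪_Y`-algebras. -/
def lift : X ⟶ relativeSpec hα :=
  Scheme.OpenCover.glueMorphismsOfLocallyDirected ((directedCover Y).pullback₁ f)
    (fun U ↦ (pullbackRestrictIsoRestrict f U.1).hom ≫ localLift hα f β U)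
    (fun i ↦ comp_pullbackRestrictIsoRestrict_localLift hα f β i
      (Scheme.Cover.trans_map ((directedCover Y).pullback₁ f) i))

theorem ι_lift (U : Y.affineOpens) :
    (f ⁻¹ᵁ U.1).ι ≫ lift hα f β = localLift hα f β U := by
  rw [← cancel_epi (pullbackRestrictIsoRestrict f U.1).hom, ← Category.assoc,
    pullbackRestrictIsoRestrict_hom_ι]
  exact Scheme.OpenCover.map_glueMorphismsOfLocallyDirected ((directedCover Y).pullback₁ f) _
    (fun i ↦ comp_pullbackRestrictIsoRestrict_localLift hα f β i
      (Scheme.Cover.trans_map ((directedCover Y).pullback₁ f) i)) U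

variable {β} (hβ : α ≫ β = f.c)
include hβ

theorem lift_toBase : lift hα f β ≫ toBase hα = f := by
  have hUf (U : Y.affineOpens) : (f ⁻¹ᵁ U.1).ι ≫ lift hα f β ≫ toBase hα =
      (f ⁻¹ᵁ U.1).ι ≫ f := by
    have hU : α.app (op U.1) ≫ β.app (op U.1) = f.app U.1 := NatTrans.congr_app hβ (op U.1)
    rw [← Category.assoc, ι_lift, localLift, Category.assoc, Category.assoc, chart_toBase,
      ← Spec.map_comp_assoc, hU, reassoc_of% Scheme.Opens.toSpecΓ_naturality f U.1]
    exact congr(f ∣_ U.1 ≫ $(IsAffineOpen.toSpecΓ_fromSpec U.2)).trans (morphismRestrict_ι f U.1)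
  exact hom_ext_of_isOpenCover (isOpenCover_preimage_affineOpens f) hUf

theorem exists_lift_appLE (U : Y.affineOpens) :
    ∃ e : F.obj (op U.1) ≅ Γ(relativeSpec hα, toBase hα ⁻¹ᵁ U.1),
      e.hom ≫ (lift hα f β).appLE (toBase hα ⁻¹ᵁ U.1) (f ⁻¹ᵁ U.1)
        (by rw [← Scheme.Hom.comp_preimage, lift_toBase hα f hβ]) = β.app (op U.1) := by
  obtain ⟨e, he⟩ := exists_sectionsIso hα U
  refine ⟨e, toSpecΓ_comp_SpecMap_injective _ _ ?_⟩
  dsimp only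
  rw [← cancel_mono (chart hα U), Spec.map_comp, Category.assoc, Category.assoc,
    Category.assoc, reassoc_of% Scheme.Opens.toSpecΓ_SpecMap_appLE, he]
  exact (Scheme.Hom.resLE_comp_ι _ _).trans (ι_lift hα f β U)

end relativeSpec

end RelativeSpec

section InvariantSections

open Scheme.AffineZariskiSite

variable {P X Y : Scheme.{u}} {a p : P ⟶ X} {f : X ⟶ Y} (h : a ≫ f = p ≫ f)

include h in
theorem preimage_preimage_le_of_comp_eq (U : Y.Opens) : p ⁻¹ᵁ f ⁻¹ᵁ U ≤ a ⁻¹ᵁ f ⁻¹ᵁ U := by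
  rw [← Scheme.Hom.comp_preimage, ← Scheme.Hom.comp_preimage, h]

/-- The ring of sections of `f_* 𝒪_X` over `U` having the same pullback under two morphisms
`a, p : P ⟶ X` over `Y`. For the action and projection morphisms `I × X ⟶ X`, these are the
`I`-invariant functions on `f⁻¹(U)`. -/
def invariantSections (U : Y.Opens) : Subring Γ(X, f ⁻¹ᵁ U) :=
  (a.appLE (f ⁻¹ᵁ U) (p ⁻¹ᵁ f ⁻¹ᵁ U) (preimage_preimage_le_of_comp_eq h U)).hom.eqLocus
    (p.app (f ⁻¹ᵁ U)).hom

theorem appLE_comp_restrict {U V : Y.Opens} (i : U ≤ V) :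
    (a.appLE (f ⁻¹ᵁ U) (p ⁻¹ᵁ f ⁻¹ᵁ U) (preimage_preimage_le_of_comp_eq h U)).hom.comp
        (X.presheaf.map (homOfLE (f.preimage_mono i)).op).hom =
      (P.presheaf.map (homOfLE (p.preimage_mono (f.preimage_mono i))).op).hom.comp
        (a.appLE (f ⁻¹ᵁ V) (p ⁻¹ᵁ f ⁻¹ᵁ V) (preimage_preimage_le_of_comp_eq h V)).hom := by
  rw [← CommRingCat.hom_comp, ← CommRingCat.hom_comp, Scheme.Hom.map_appLE, Scheme.Hom.appLE_map]

theorem app_comp_restrict (p : P ⟶ X) {V W : X.Opens} (i : V ≤ W) :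
    (p.app V).hom.comp (X.presheaf.map (homOfLE i).op).hom =
      (P.presheaf.map (homOfLE (p.preimage_mono i)).op).hom.comp (p.app W).hom :=
  congr(($(p.naturality (homOfLE i).op)).hom)

/-- The presheaf of sections of `f_* 𝒪_X` having the same pullback under `a` and `p`. -/
def invariantPresheaf : Y.Opensᵒᵖ ⥤ CommRingCat.{u} where
  obj U := .of (invariantSections h U.unop)
  map i := CommRingCat.ofHom (eqLocusMap _ _ (appLE_comp_restrict h i.unop.le)
    (app_comp_restrict p (f.preimage_mono i.unop.le)))
  map_id U := by
    refine CommRingCat.hom_ext (RingHom.ext fun x ↦ Subtype.ext ?_)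
    exact congr($(X.presheaf.map_id (op (f ⁻¹ᵁ U.unop))) x.1)
  map_comp i j := by
    refine CommRingCat.hom_ext (RingHom.ext fun x ↦ Subtype.ext ?_)
    exact congr($(X.presheaf.map_comp (homOfLE (f.preimage_mono i.unop.le)).op
      (homOfLE (f.preimage_mono j.unop.le)).op) x.1)

theorem app_mem_invariantSections (U : Y.Opens) (s : Γ(Y, U)) :
    f.app U s ∈ invariantSections h U := by
  change (f.app U ≫ a.appLE _ _ _) s = (f.app U ≫ p.app _) s
  rw [Scheme.Hom.app_eq_appLE, Scheme.Hom.appLE_comp_appLE, Scheme.Hom.app_eq_appLE,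
    Scheme.Hom.appLE_comp_appLE]
  simp only [h]

/-- The structure morphism of the presheaf of invariant sections as an `𝒪_Y`-algebra. -/
def toInvariantPresheaf : Y.presheaf ⟶ invariantPresheaf h where
  app U := CommRingCat.ofHom ((f.app U.unop).hom.codRestrict _ (app_mem_invariantSections h U.unop))
  naturality _ _ i := by
    ext x
    exact Subtype.ext congr($(f.naturality i) x)

/-- The inclusion of the presheaf of invariant sections into `f_* 𝒪_X`. -/
def invariantPresheafι :
    invariantPresheaf h ⟶ (TopCat.Presheaf.pushforward CommRingCat f.base).obj X.presheaf where
  app U := CommRingCat.ofHom (invariantSections h U.unop).subtype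

theorem isLocalizationAway_app {U : Y.Opens} (hU : IsAffineOpen U) [QuasiCompact f]
    [QuasiSeparated f] (r : Γ(Y, U)) :
    letI := (X.presheaf.map (homOfLE (f.preimage_mono (Y.basicOpen_le r))).op).hom.toAlgebra
    IsLocalization.Away (f.app U r) Γ(X, f ⁻¹ᵁ Y.basicOpen r) := by
  suffices ∀ (V : X.Opens) (_ : V = X.basicOpen (f.app U r)) (hV : V ≤ f ⁻¹ᵁ U),
      letI := (X.presheaf.map (homOfLE hV).op).hom.toAlgebra
      IsLocalization.Away (f.app U r) Γ(X, V) from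
    this _ (f.preimage_basicOpen r) _
  rintro _ rfl _
  exact isLocalization_basicOpen_of_qcqs (f.isCompact_preimage hU.isCompact)
    (f.isQuasiSeparated_preimage hU.isQuasiSeparated) (f.app _ r)

theorem coequifibered_toInvariantPresheaf [QuasiCompact f] [QuasiSeparated f] [QuasiCompact p]
    [QuasiSeparated p] :
    ((toOpensFunctor Y).op.whiskerLeft (toInvariantPresheaf h)).Coequifibered := by
  refine coequifibered_iff_forall_isLocalizationAway.mpr fun U r ↦ ?_
  let hle := f.preimage_mono (Y.basicOpen_le r)
  let := (X.presheaf.map (homOfLE hle).op).hom.toAlgebra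
  let := (P.presheaf.map (homOfLE (p.preimage_mono hle)).op).hom.toAlgebra
  have : IsLocalization.Away (f.app U.1 r) Γ(X, f ⁻¹ᵁ Y.basicOpen r) :=
    isLocalizationAway_app U.2 r
  have : IsLocalization.Away (p.app (f ⁻¹ᵁ U.1) (f.app U.1 r)) Γ(P, p ⁻¹ᵁ f ⁻¹ᵁ Y.basicOpen r) := by
    simpa only [Scheme.Hom.comp_app] using! isLocalizationAway_app (f := p ≫ f) U.2 r
  exact isLocalizationAway_eqLocus (appLE_comp_restrict h (Y.basicOpen_le r))
    (app_comp_restrict p hle) (app_mem_invariantSections h U.1 r)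

/-- `φ : X ⟶ Q` is the affine quotient of the parallel pair `a, p : P ⟶ X` over `Y`: the structure
sheaf of `Q` is the sheaf of sections of `𝒪_X` having the same pullback under `a` and `p`. Both
conditions are only imposed over affine opens of `Y`. -/
structure IsInvariantQuotientOver {Q : Scheme.{u}} (a p : P ⟶ X) (φ : X ⟶ Q) (π : Q ⟶ Y) :
    Prop where
  comp_eq : a ≫ φ ≫ π = p ≫ φ ≫ π
  injective_app (U : Y.Opens) (hU : IsAffineOpen U) : Function.Injective (φ.app (π ⁻¹ᵁ U))
  range_app (U : Y.Opens) (hU : IsAffineOpen U) :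
    (φ.app (π ⁻¹ᵁ U)).hom.range = invariantSections comp_eq U

theorem isInvariantQuotientOver_of_appLE {Q : Scheme.{u}} {φ : X ⟶ Q} {π : Q ⟶ Y}
    (hf : φ ≫ π = f)
    (e : ∀ U : Y.Opens, IsAffineOpen U → invariantSections h U ≃+* Γ(Q, π ⁻¹ᵁ U))
    (he : ∀ (U : Y.Opens) (hU : IsAffineOpen U),
      (φ.appLE (π ⁻¹ᵁ U) (f ⁻¹ᵁ U) (by rw [← Scheme.Hom.comp_preimage, hf])).hom.comp
        (e U hU : _ →+* _) = (invariantSections h U).subtype) :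
    IsInvariantQuotientOver a p φ π := by
  subst hf
  refine ⟨h, fun U hU ↦ ?_, fun U hU ↦ ?_⟩
  all_goals rw [Scheme.Hom.app_eq_appLE]
  · exact injective_of_comp_eq_subtype (he U hU)
  · exact range_eq_of_comp_eq_subtype (he U hU)

include h in
theorem exists_isInvariantQuotientOver [QuasiCompact f] [QuasiSeparated f] [QuasiCompact p]
    [QuasiSeparated p] :
    ∃ (Q : Scheme.{u}) (φ : X ⟶ Q) (π : Q ⟶ Y),
      φ ≫ π = f ∧ IsAffineHom π ∧ IsInvariantQuotientOver a p φ π := by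
  let hα := coequifibered_toInvariantPresheaf h
  have hβ : toInvariantPresheaf h ≫ invariantPresheafι h = f.c := rfl
  have hφ := relativeSpec.lift_toBase hα f hβ
  choose e he using fun U : Y.affineOpens ↦ relativeSpec.exists_lift_appLE hα f hβ U
  exact ⟨_, _, _, hφ, inferInstance, isInvariantQuotientOver_of_appLE h hφ
    (fun U hU ↦ (e ⟨U, hU⟩).commRingCatIsoToRingEquiv)
    (fun U hU ↦ congr(($(he ⟨U, hU⟩)).hom))⟩

end InvariantSections

section UniversalProperty

variable {P X Y Z : Scheme.{u}}

theorem toSpecΓ_SpecMap_appLE_fromSpec (f : X ⟶ Z) {V : X.Opens} {W : Z.Opens}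
    (hW : IsAffineOpen W) (hle : V ≤ f ⁻¹ᵁ W) :
    V.toSpecΓ ≫ Spec.map (f.appLE W V hle) ≫ hW.fromSpec = V.ι ≫ f := by
  rw [Scheme.Opens.toSpecΓ_SpecMap_appLE_assoc, hW.toSpecΓ_fromSpec, Scheme.Hom.resLE_comp_ι]

theorem ι_comp_eq_of_appLE_eq {f g : X ⟶ Z} {V : X.Opens} {W : Z.Opens} (hW : IsAffineOpen W)
    (hf : V ≤ f ⁻¹ᵁ W) (hg : V ≤ g ⁻¹ᵁ W) (h : f.appLE W V hf = g.appLE W V hg) :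
    V.ι ≫ f = V.ι ≫ g := by
  rw [← toSpecΓ_SpecMap_appLE_fromSpec f hW hf, h, toSpecΓ_SpecMap_appLE_fromSpec]

theorem exists_isAffineOpen_preimage_le {f : X ⟶ Y} (hf : IsClosedMap f)
    (hf' : Function.Injective f) (u : X ⟶ Z) (x : X) :
    ∃ (U : Y.Opens) (W : Z.Opens), IsAffineOpen U ∧ IsAffineOpen W ∧ f x ∈ U ∧
      f ⁻¹ᵁ U ≤ u ⁻¹ᵁ W := by
  obtain ⟨W, hW, hxW, -⟩ := exists_isAffineOpen_mem_and_subset (x := u x) (U := ⊤) trivial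
  let N : Y.Opens :=
    ⟨(f '' (u ⁻¹ᵁ W : Set X)ᶜ)ᶜ, (hf _ (u ⁻¹ᵁ W).isOpen.isClosed_compl).isOpen_compl⟩
  have hxN : f x ∈ N := by
    rintro ⟨y, hy, hyx⟩
    exact hy (hf' hyx ▸ hxW)
  obtain ⟨U, hU, hxU, hUN⟩ := exists_isAffineOpen_mem_and_subset hxN
  refine ⟨U, W, hU, hW, hxU, fun y hy ↦ ?_⟩
  by_contra hn
  exact hUN hy ⟨y, hn, rfl⟩

theorem comp_eq_of_morphismRestrict_comp_eq {φ : X ⟶ Y} {u : X ⟶ Z} {V : Y.Opens}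
    {v : V.toScheme ⟶ Z} (hv : (φ ∣_ V) ≫ v = (φ ⁻¹ᵁ V).ι ≫ u) {T : Scheme.{u}} {t : T ⟶ X}
    {s : T ⟶ V} (hts : t ≫ φ = s ≫ V.ι) : s ≫ v = t ≫ u := by
  have hV := isPullback_morphismRestrict φ V
  rw [← hV.lift_fst s t hts.symm, Category.assoc, hv, hV.lift_snd_assoc]

theorem exists_comp_eq_of_isOpenCover (φ : X ⟶ Y) [IsSchemeTheoreticallyDominant φ]
    [QuasiCompact φ] [Surjective φ] (u : X ⟶ Z) {ι : Type u} {V : ι → Y.Opens}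
    (hV : TopologicalSpace.IsOpenCover V)
    (h : ∀ i, ∃ v : (V i).toScheme ⟶ Z, (φ ∣_ V i) ≫ v = (φ ⁻¹ᵁ V i).ι ≫ u) :
    ∃ v : Y ⟶ Z, φ ≫ v = u := by
  choose v hv using h
  let 𝒰 := Y.openCoverOfIsOpenCover V hV
  have hvv (i j : ι) : pullback.fst (V i).ι (V j).ι ≫ v i = pullback.snd (V i).ι (V j).ι ≫ v j := by
    let g := pullback.fst (V i).ι (V j).ι ≫ (V i).ι
    have := epi_of_isSchemeTheoreticallyDominant (pullback.snd φ g)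
    rw [← cancel_epi (pullback.snd φ g), ← Category.assoc, ← Category.assoc,
      comp_eq_of_morphismRestrict_comp_eq (hv i) (t := pullback.fst φ g),
      comp_eq_of_morphismRestrict_comp_eq (hv j) (t := pullback.fst φ g)]
    · rw [pullback.condition, Category.assoc, ← pullback.condition (f := (V i).ι)]
    · rw [pullback.condition, Category.assoc]
  have hglue (i : ι) : (V i).ι ≫ 𝒰.glueMorphisms v hvv = v i :=
    Scheme.Cover.ι_glueMorphisms 𝒰 v hvv i
  refine ⟨𝒰.glueMorphisms v hvv, hom_ext_of_isOpenCover (U := fun i ↦ φ ⁻¹ᵁ V i)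
    (hV.comap φ.base.1) fun i ↦ ?_⟩
  rw [← hv i, ← hglue, morphismRestrict_ι_assoc]

namespace IsInvariantQuotientOver

variable {Q : Scheme.{u}} {a p : P ⟶ X} {φ : X ⟶ Q} {π : Q ⟶ Y}
  (h : IsInvariantQuotientOver a p φ π)

include h

theorem preimage_le (U : Y.Opens) : p ⁻¹ᵁ φ ⁻¹ᵁ π ⁻¹ᵁ U ≤ a ⁻¹ᵁ φ ⁻¹ᵁ π ⁻¹ᵁ U :=
  preimage_preimage_le_of_comp_eq h.comp_eq U

theorem mem_range_app_iff {U : Y.Opens} (hU : IsAffineOpen U) (s : Γ(X, φ ⁻¹ᵁ π ⁻¹ᵁ U)) :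
    s ∈ (φ.app (π ⁻¹ᵁ U)).hom.range ↔
      a.appLE _ _ (h.preimage_le U) s = p.appLE (φ ⁻¹ᵁ π ⁻¹ᵁ U) _ le_rfl s := by
  rw [h.range_app U hU, ← Scheme.Hom.app_eq_appLE]
  rfl

theorem exists_comp_app_eq {u : X ⟶ Z} (hu : a ≫ u = p ≫ u) {U : Y.Opens} (hU : IsAffineOpen U)
    {W : Z.Opens} (hle : φ ⁻¹ᵁ π ⁻¹ᵁ U ≤ u ⁻¹ᵁ W) :
    ∃ γ : Γ(Z, W) ⟶ Γ(Q, π ⁻¹ᵁ U), γ ≫ φ.app (π ⁻¹ᵁ U) = u.appLE W (φ ⁻¹ᵁ π ⁻¹ᵁ U) hle := by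
  obtain ⟨γ, hγ⟩ := exists_comp_eq_of_range_le (f := (u.appLE W _ hle).hom)
    (h.injective_app U hU) (by
      rintro _ ⟨z, rfl⟩
      rw [h.mem_range_app_iff hU, ← CommRingCat.comp_apply, ← CommRingCat.comp_apply,
        Scheme.Hom.appLE_comp_appLE, Scheme.Hom.appLE_comp_appLE]
      simp only [hu])
  exact ⟨CommRingCat.ofHom γ, CommRingCat.hom_ext hγ⟩

theorem exists_morphismRestrict_comp_eq {u : X ⟶ Z} (hu : a ≫ u = p ≫ u) {U : Y.Opens}
    (hU : IsAffineOpen U) {W : Z.Opens} (hW : IsAffineOpen W) (hle : φ ⁻¹ᵁ π ⁻¹ᵁ U ≤ u ⁻¹ᵁ W) :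
    ∃ v : (π ⁻¹ᵁ U).toScheme ⟶ Z, (φ ∣_ π ⁻¹ᵁ U) ≫ v = (φ ⁻¹ᵁ π ⁻¹ᵁ U).ι ≫ u := by
  obtain ⟨γ, hγ⟩ := h.exists_comp_app_eq hu hU hle
  refine ⟨(π ⁻¹ᵁ U).toSpecΓ ≫ Spec.map γ ≫ hW.fromSpec, ?_⟩
  rw [← toSpecΓ_SpecMap_appLE_fromSpec u hW hle, ← hγ, Spec.map_comp, Category.assoc,
    reassoc_of% Scheme.Opens.toSpecΓ_naturality φ]

variable [IsAffineHom π]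

theorem isSchemeTheoreticallyDominant [QuasiCompact φ] : IsSchemeTheoreticallyDominant φ where
  ker_eq_bot := by
    refine Scheme.IdealSheafData.ext_of_iSup_eq_top
      (fun U : Y.affineOpens ↦ ⟨π ⁻¹ᵁ U.1, U.2.preimage π⟩)
      (isOpenCover_preimage_affineOpens π) fun U ↦ ?_
    rw [Scheme.Hom.ker_apply, (RingHom.injective_iff_ker_eq_bot _).mp (h.injective_app U.1 U.2)]
    rfl

theorem isFinite_right [IsLocallyNoetherian Y] [IsFinite (φ ≫ π)] : IsFinite π where
  finite_app U hU := by
    have : IsNoetherianRing Γ(Y, U) := IsLocallyNoetherian.component_noetherian ⟨U, hU⟩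
    refine ringHom_finite_of_comp_of_injective (h.injective_app U hU) ?_
    rw [← CommRingCat.hom_comp, ← Scheme.Hom.comp_app]
    exact IsFinite.finite_app (φ ≫ π) U hU

theorem surjective [IsFinite φ] : Surjective φ := by
  have := h.isSchemeTheoreticallyDominant
  refine ⟨Set.range_eq_univ.mp ?_⟩
  rw [← φ.isClosedMap.isClosed_range.closure_eq, φ.denseRange.closure_range]

theorem comp_left_eq : a ≫ φ = p ≫ φ := by
  refine hom_ext_of_isOpenCover (U := fun U : Y.affineOpens ↦ p ⁻¹ᵁ φ ⁻¹ᵁ π ⁻¹ᵁ U.1)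
    (isOpenCover_preimage_affineOpens (p ≫ φ ≫ π)) fun U ↦ ?_
  refine ι_comp_eq_of_appLE_eq (U.2.preimage π) (h.preimage_le U.1) le_rfl ?_
  refine (Scheme.Hom.comp_appLE ..).trans (.trans ?_ (Scheme.Hom.comp_appLE ..).symm)
  ext t
  exact (h.mem_range_app_iff U.2 _).mp ⟨t, rfl⟩

theorem existsUnique_comp_eq [IsFinite φ] [IsFinite (φ ≫ π)] [UniversallyInjective (φ ≫ π)]
    {u : X ⟶ Z} (hu : a ≫ u = p ≫ u) : ∃! v : Q ⟶ Z, φ ≫ v = u := by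
  have := h.isSchemeTheoreticallyDominant
  have := h.surjective
  have := epi_of_isSchemeTheoreticallyDominant φ
  refine existsUnique_of_exists_of_unique ?_ fun v w hv hw ↦ by rw [← cancel_epi φ, hv, hw]
  choose U W hU hW hxU hle using
    exists_isAffineOpen_preimage_le (φ ≫ π).isClosedMap (φ ≫ π).injective u
  refine exists_comp_eq_of_isOpenCover φ u (V := fun x ↦ π ⁻¹ᵁ U x) (top_le_iff.mp fun q _ ↦ ?_)
    fun x ↦ h.exists_morphismRestrict_comp_eq hu (hU x) (hW x) (hle x)
  obtain ⟨x, rfl⟩ := φ.surjective q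
  exact TopologicalSpace.Opens.mem_iSup.mpr ⟨x, hxU x⟩

end IsInvariantQuotientOver

end UniversalProperty

section CategoricalQuotient

variable {G : GroupSchemeOver k} {X Y Q R : SchemeOver k}

namespace ActionOver

variable (α : ActionOver G X)

/-- The action morphism `G ×ₖ X ⟶ X`. -/
def actMap : pullback G.str X.str ⟶ X.carrier :=
  α.act (pullback.fst G.str X.str) (pullback.snd G.str X.str) pullback.condition

theorem lift_actMap {T : Scheme.{u}} (g : T ⟶ G.carrier) (x : T ⟶ X.carrier)
    (h : g ≫ G.str = x ≫ X.str) : pullback.lift g x h ≫ α.actMap = α.act g x h :=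
  (α.act_natural _ _ _ _ (by rw [Category.assoc, Category.assoc, pullback.condition])).trans
    (α.act_congr (pullback.lift_fst _ _ _) (pullback.lift_snd _ _ _) _ _)

theorem forall_act_comp_eq_iff {Z : Scheme.{u}} {u : X.carrier ⟶ Z} :
    (∀ {T : Scheme.{u}} (g : T ⟶ G.carrier) (x : T ⟶ X.carrier) (h),
      α.act g x h ≫ u = x ≫ u) ↔ α.actMap ≫ u = pullback.snd G.str X.str ≫ u := by
  refine ⟨fun H ↦ H _ _ _, fun H T g x h ↦ ?_⟩
  rw [← α.lift_actMap, Category.assoc, H, pullback.lift_snd_assoc]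

end ActionOver

theorem IsCatQuotient.exists_iso {α : ActionOver G X} {φ : X.carrier ⟶ Q.carrier}
    {χ : X.carrier ⟶ R.carrier} (hQ : IsCatQuotient α Q φ) (hR : IsCatQuotient α R χ) :
    ∃ e : Q.carrier ≅ R.carrier, φ ≫ e.hom = χ := by
  obtain ⟨e, he, -⟩ := hQ.2.2 R χ hR.1 hR.2.1
  obtain ⟨e', he', -⟩ := hR.2.2 Q φ hQ.1 hQ.2.1
  refine ⟨⟨e, e', (hQ.2.2 Q φ hQ.1 hQ.2.1).unique ?_ (Category.comp_id _),
    (hR.2.2 R χ hR.1 hR.2.1).unique ?_ (Category.comp_id _)⟩, he⟩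
  · rw [← Category.assoc, he, he']
  · rw [← Category.assoc, he', he]

theorem IsInvariantQuotientOver.isCatQuotient {α : ActionOver G X} {Y : Scheme.{u}}
    {φ : X.carrier ⟶ Q.carrier} {π : Q.carrier ⟶ Y}
    (h : IsInvariantQuotientOver α.actMap (pullback.snd G.str X.str) φ π)
    (hφ : φ ≫ Q.str = X.str) [IsAffineHom π] [IsFinite φ] [IsFinite (φ ≫ π)]
    [UniversallyInjective (φ ≫ π)] : IsCatQuotient α Q φ :=
  ⟨hφ, α.forall_act_comp_eq_iff.mpr h.comp_left_eq,
    fun _ _ _ hu ↦ h.existsUnique_comp_eq (α.forall_act_comp_eq_iff.mp hu)⟩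

theorem IsCatQuotient.isFiniteType {α : ActionOver G X} {φ : X.carrier ⟶ Q.carrier}
    (hQ : IsCatQuotient α Q φ) [QuasiCompact X.str] [Surjective φ] [LocallyOfFiniteType Q.str] :
    Q.IsFiniteType :=
  have : QuasiCompact (φ ≫ Q.str) := hQ.1 ▸ inferInstance
  ⟨inferInstance, quasiCompact_of_comp_of_surjective φ Q.str⟩

theorem exists_isCatQuotient_of_finite_invariant [QuasiCompact G.str] [QuasiSeparated G.str]
    (α : ActionOver G X) [LocallyOfFiniteType Y.str] {f : X.carrier ⟶ Y.carrier}
    (hf : f ≫ Y.str = X.str)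
    (hα : ∀ {T : Scheme.{u}} (g : T ⟶ G.carrier) (x : T ⟶ X.carrier) (h),
      α.act g x h ≫ f = x ≫ f)
    [IsFinite f] [Surjective f] [UniversallyInjective f] :
    ∃ (Q : SchemeOver k) (φ : X.carrier ⟶ Q.carrier) (π : Q.carrier ⟶ Y.carrier),
      IsCatQuotient α Q φ ∧ LocallyOfFiniteType Q.str ∧ φ ≫ π = f ∧
      (IsFinite φ ∧ Surjective φ ∧ UniversallyInjective φ) ∧
      IsFinite π ∧ Surjective π ∧ UniversallyInjective π := by
  have := LocallyOfFiniteType.isLocallyNoetherian Y.str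
  obtain ⟨Q, φ, π, rfl, hπ, hQ⟩ :=
    exists_isInvariantQuotientOver (α.forall_act_comp_eq_iff.mp hα)
  have : IsFinite φ := .of_comp φ π
  have : IsFinite π := hQ.isFinite_right
  have : Surjective φ := hQ.surjective
  refine ⟨⟨Q, π ≫ Y.str⟩, φ, π, hQ.isCatQuotient (by rw [← hf, Category.assoc]),
    inferInstanceAs (LocallyOfFiniteType (π ≫ Y.str)), rfl, ⟨inferInstance, inferInstance,
    universallyInjective_of_comp φ π⟩, inferInstance, .of_comp φ π,
    universallyInjective_of_comp_of_surjective φ π⟩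

theorem infinitesimal_quotient_exists_and_frobenius_factors_general
    {p : ℕ} [Fact p.Prime] [CharP k p] {n : ℕ} {I : GroupSchemeOver k} [QuasiCompact I.str]
    [QuasiSeparated I.str] (hn : FrobKillsAt k p I n) {X : SchemeOver k}
    [LocallyOfFiniteType X.str] (α : ActionOver I X) :
    (∃ (Q : SchemeOver k) (φ : X.carrier ⟶ Q.carrier),
      IsCatQuotient α Q φ ∧ LocallyOfFiniteType Q.str ∧
      IsFinite φ ∧ Surjective φ ∧ UniversallyInjective φ) ∧
    ∀ (Q : SchemeOver k) (φ : X.carrier ⟶ Q.carrier), IsCatQuotient α Q φ →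
      ∀ FD : FrobeniusData k p n X,
        ∃ ψ : Q.carrier ⟶ FD.tw.carrier,
          φ ≫ ψ = FD.rel ∧ (∀ ψ' : Q.carrier ⟶ FD.tw.carrier, φ ≫ ψ' = FD.rel → ψ' = ψ) ∧
          IsFinite ψ ∧ Surjective ψ ∧ UniversallyInjective ψ := by
  have exists_quotient (FD : FrobeniusData k p n X) :=
    have := FD.locallyOfFiniteType_tw_str
    have := FD.isFinite_rel
    have := FD.surjective_rel
    have := FD.universallyInjective_rel
    exists_isCatQuotient_of_finite_invariant α FD.rel_str (hn.act_comp_rel α FD)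
  constructor
  · obtain ⟨Q, φ, -, hQ, hQft, -, hφ, -⟩ := exists_quotient (.ofPullback k p n X)
    exact ⟨Q, φ, hQ, hQft, hφ⟩
  · intro Q φ hQ FD
    obtain ⟨R, χ, π, hR, -, hχπ, -, hπ, hπ', hπ''⟩ := exists_quotient FD
    obtain ⟨e, he⟩ := hQ.exists_iso hR
    have hψ : φ ≫ e.hom ≫ π = FD.rel := by rw [reassoc_of% he, hχπ]
    refine ⟨e.hom ≫ π, hψ, fun ψ' hψ' ↦ ?_, inferInstance, inferInstance,
      MorphismProperty.comp_mem _ _ _ inferInstance hπ''⟩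
    exact (hQ.2.2 FD.tw FD.rel FD.rel_str (hn.act_comp_rel α FD)).unique hψ' hψ

end CategoricalQuotient

/-- Let `k` be a field of characteristic `p > 0`, `I` an infinitesimal
group scheme over `k`, and `X` a scheme of finite type over `k` with an `I`-action. Then
(i) there is a categorical quotient `φ : X ⟶ X/I` with `X/I` of finite type and `φ` finite,
surjective and radicial; and (ii) for `n ≥ h(I)`, the `n`-th relative Frobenius
`F^n_{X/k} : X ⟶ X^{(pⁿ)}` factors uniquely through `φ` via a morphism `ψ` which is also
finite, surjective and radicial. -/
theorem infinitesimal_quotient_exists_and_frobenius_factors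
    {k : Type u} [Field k] (p : ℕ) [Fact p.Prime] [CharP k p]
    (I : GroupSchemeOver k) (hI : I.IsInfinitesimal)
    (X : SchemeOver k) (hXft : X.IsFiniteType) (α : ActionOver I X) :
    (∃ (Q : SchemeOver k) (φ : X.carrier ⟶ Q.carrier),
      IsCatQuotient α Q φ ∧ Q.IsFiniteType ∧
      IsFinite φ ∧ AlgebraicGeometry.Surjective φ ∧ UniversallyInjective φ) ∧
    (∀ n : ℕ, 0 < n → FrobKillsAt k p I n →
      ∀ (Q : SchemeOver k) (φ : X.carrier ⟶ Q.carrier), IsCatQuotient α Q φ →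
        ∀ FD : FrobeniusData k p n X,
          ∃ ψ : Q.carrier ⟶ FD.tw.carrier,
            φ ≫ ψ = FD.rel ∧ (∀ ψ' : Q.carrier ⟶ FD.tw.carrier, φ ≫ ψ' = FD.rel → ψ' = ψ) ∧
            IsFinite ψ ∧ AlgebraicGeometry.Surjective ψ ∧ UniversallyInjective ψ) := by
  have := hI.2.1
  obtain ⟨_, _⟩ := hXft
  obtain ⟨n, hn⟩ := hI.exists_frobKillsAt p
  obtain ⟨⟨Q, φ, hQ, _, hφ, hφ', hφ''⟩, -⟩ :=
    infinitesimal_quotient_exists_and_frobenius_factors_general hn α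
  exact ⟨⟨Q, φ, hQ, hQ.isFiniteType, hφ, hφ', hφ''⟩, fun n _ hn ↦
    (infinitesimal_quotient_exists_and_frobenius_factors_general hn α).2⟩
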